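/- arXiv:math/0502128 — 2 statements merged into one kernel-verified Lean document; each statement's English description precedes it below -/
import Mathlib

section
/- Let (U, •, g̃, E) be a weak F-manifold, where U is a nonempty connected open subset of ℝ^n with n ≥ 3, with L_E g̃ = D̃·g̃ and L_E(•) = k·• for smooth functions D̃, k on U. Then k is constant on U (i.e. the Euler vector field rescales the multiplication • by a constant). -/
open scoped BigOperators

noncomputable section

/-- Points of ℝⁿ. -/
abbrev Pt (n : ℕ) := Fin n → ℝ
/-- Vector fields (globally defined functions; conditions are imposed on an open set). -/
abbrev VF (n : ℕ) := Pt n → Fin n → ℝ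
/-- 1-forms. -/
abbrev OneForm (n : ℕ) := Pt n → Fin n → ℝ
/-- Metrics: smooth maps into symmetric invertible matrices. -/
abbrev Met (n : ℕ) := Pt n → Matrix (Fin n) (Fin n) ℝ
/-- (1,2)-tensor fields (multiplications on tangent vectors): components `c t k i j` = c^k_{ij}(t). -/
abbrev Mul2 (n : ℕ) := Pt n → Fin n → Fin n → Fin n → ℝ

variable {n : ℕ}

/-- Partial derivative ∂ᵢ f (t). -/
def pder (i : Fin n) (f : Pt n → ℝ) (t : Pt n) : ℝ :=
  fderiv ℝ f t (Pi.single i 1)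

/-- Smoothness (on `U`) of a vector field or a 1-form. -/
def SmoothVF (U : Set (Pt n)) (X : VF n) : Prop :=
  ∀ k, ContDiffOn ℝ (⊤ : ℕ∞) (fun t => X t k) U

def SmoothMet (U : Set (Pt n)) (g : Met n) : Prop :=
  ∀ i j, ContDiffOn ℝ (⊤ : ℕ∞) (fun t => g t i j) U

def SmoothMul2 (U : Set (Pt n)) (c : Mul2 n) : Prop :=
  ∀ k i j, ContDiffOn ℝ (⊤ : ℕ∞) (fun t => c t k i j) U

/-- `g` is a (pseudo-Riemannian) metric on `U`: smooth, symmetric, invertible. -/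
def IsMetricOn (U : Set (Pt n)) (g : Met n) : Prop :=
  SmoothMet U g ∧ ∀ t ∈ U, (g t).IsSymm ∧ IsUnit (g t)

/-- The 1-form g(X). -/
def mdown (g : Met n) (X : VF n) : OneForm n := fun t k => ∑ j, g t k j * X t j
/-- The vector field g*α. -/
def mup (g : Met n) (α : OneForm n) : VF n := fun t k => ∑ j, (g t)⁻¹ k j * α t j
/-- g*(α, β). -/
def mup2 (g : Met n) (α β : OneForm n) (t : Pt n) : ℝ :=
  ∑ i, ∑ j, (g t)⁻¹ i j * α t i * β t j
/-- g(X, Y). -/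
def mdown2 (g : Met n) (X Y : VF n) (t : Pt n) : ℝ :=
  ∑ i, ∑ j, g t i j * X t i * Y t j

/-- Christoffel symbols Γ(g)^k_{ij}(t). -/
def chr (g : Met n) (k i j : Fin n) (t : Pt n) : ℝ :=
  (1/2) * ∑ l, (g t)⁻¹ k l *
    (pder i (fun s => g s j l) t + pder j (fun s => g s i l) t - pder l (fun s => g s i j) t)

/-- Levi-Civita covariant derivative ∇^g_X Y of a vector field. -/
def covV (g : Met n) (X Y : VF n) : VF n :=
  fun t k => ∑ i, X t i * (pder i (fun s => Y s k) t + ∑ m, chr g k i m t * Y t m)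

/-- Levi-Civita covariant derivative ∇^g_X α of a 1-form. -/
def covF (g : Met n) (X : VF n) (α : OneForm n) : OneForm n :=
  fun t k => ∑ i, X t i * (pder i (fun s => α s k) t - ∑ m, chr g m i k t * α t m)

/-- Lie bracket [X, Y]. -/
def vbr (X Y : VF n) : VF n :=
  fun t k => ∑ i, (X t i * pder i (fun s => Y s k) t - Y t i * pder i (fun s => X s k) t)

/-- Curvature R(g)_{X,Y} Z = ∇_X ∇_Y Z − ∇_Y ∇_X Z − ∇_{[X,Y]} Z. -/
def curvV (g : Met n) (X Y Z : VF n) : VF n :=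
  fun t k => covV g X (covV g Y Z) t k - covV g Y (covV g X Z) t k
    - covV g (vbr X Y) Z t k

/-- Curvature acting on 1-forms: (R(g)_{X,Y} α)(Z) = −α(R(g)_{X,Y} Z). -/
def curvF (g : Met n) (X Y : VF n) (α : OneForm n) : OneForm n :=
  fun t k => - ∑ m, α t m * curvV g X Y (fun _ => Pi.single k 1) t m

/-- `g` is flat on `U`: the curvature tensor vanishes identically. -/
def FlatOn (U : Set (Pt n)) (g : Met n) : Prop :=
  ∀ X Y Z : VF n, SmoothVF U X → SmoothVF U Y → SmoothVF U Z →
    ∀ t ∈ U, ∀ k, curvV g X Y Z t k = 0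

/-- `g` has constant sectional curvature `s` on `U`. -/
def ConstSecCurv (U : Set (Pt n)) (g : Met n) (s : ℝ) : Prop :=
  ∀ X Y : VF n, SmoothVF U X → SmoothVF U Y → ∀ t ∈ U,
    mdown2 g (curvV g X Y Y) X t
      = s * (mdown2 g X X t * mdown2 g Y Y t - (mdown2 g X Y t) ^ 2)

/-- The metric g_λ of the pencil: its inverse matrix is g⁻¹ + λ g̃⁻¹. -/
def pencil (g g' : Met n) (lam : ℝ) : Met n :=
  fun t => ((g t)⁻¹ + lam • (g' t)⁻¹)⁻¹

/-- Almost compatibility of the pair (g, g̃) on `U`. -/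
def AlmostCompatible (U : Set (Pt n)) (g g' : Met n) : Prop :=
  ∀ lam : ℝ, (∀ t ∈ U, IsUnit ((g t)⁻¹ + lam • (g' t)⁻¹)) →
    ∀ X : VF n, SmoothVF U X → ∀ α : OneForm n, SmoothVF U α →
      ∀ t ∈ U, ∀ k,
        mup (pencil g g' lam) (covF (pencil g g' lam) X α) t k
          = mup g (covF g X α) t k + lam * mup g' (covF g' X α) t k

/-- Compatibility of the pair (g, g̃) on `U`. -/
def Compatible (U : Set (Pt n)) (g g' : Met n) : Prop :=
  AlmostCompatible U g g' ∧
  ∀ lam : ℝ, (∀ t ∈ U, IsUnit ((g t)⁻¹ + lam • (g' t)⁻¹)) →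
    ∀ X Y : VF n, SmoothVF U X → SmoothVF U Y →
      ∀ α : OneForm n, SmoothVF U α →
        ∀ t ∈ U, ∀ k,
          mup (pencil g g' lam) (curvF (pencil g g' lam) X Y α) t k
            = mup g (curvF g X Y α) t k + lam * mup g' (curvF g' X Y α) t k

/-- The multiplication α ∘ β = ∇^g_{g*α} β − ∇^{g̃}_{g*α} β on 1-forms. -/
def circM (g g' : Met n) (α β : OneForm n) : OneForm n :=
  fun t k => covF g (mup g α) β t k - covF g' (mup g α) β t k

/-- The endomorphism T(u) = g(E) ∘ u of 1-forms, as a pointwise matrix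
(`∘` being tensorial in its second argument). -/
def Tmat (g g' : Met n) (E : VF n) (t : Pt n) : Matrix (Fin n) (Fin n) ℝ :=
  Matrix.of fun k m => circM g g' (mdown g E) (fun _ => Pi.single m 1) t k

/-- The triple (g, g̃, E) is regular on `U` if T is invertible at every point. -/
def RegularTriple (U : Set (Pt n)) (g g' : Met n) (E : VF n) : Prop :=
  ∀ t ∈ U, IsUnit (Tmat g g' E t)

/-- T⁻¹(v). -/
def TinvF (g g' : Met n) (E : VF n) (v : OneForm n) : OneForm n :=
  fun t k => ∑ m, (Tmat g g' E t)⁻¹ k m * v t m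

/-- The multiplication u • v = u ∘ T⁻¹(v) on 1-forms. -/
def bulF (g g' : Met n) (E : VF n) (u v : OneForm n) : OneForm n :=
  circM g g' u (TinvF g g' E v)

/-- The multiplication • on vector fields: X • Y = g̃*((g̃X) • (g̃Y)). -/
def bulV (g g' : Met n) (E : VF n) (X Y : VF n) : VF n :=
  mup g' (bulF g g' E (mdown g' X) (mdown g' Y))

/-- The multiplication • associated to the regular triple (g, g̃, E), as a (1,2)-tensor. -/
def bulMul (g g' : Met n) (E : VF n) : Mul2 n :=
  fun t k i j => bulV g g' E (fun _ => Pi.single i 1) (fun _ => Pi.single j 1) t k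

/-- Applying a (1,2)-tensor to vector fields. -/
def mapp (c : Mul2 n) (X Y : VF n) : VF n :=
  fun t k => ∑ i, ∑ j, c t k i j * X t i * Y t j

/-- Transporting a multiplication on tangent vectors to a multiplication
on 1-forms via the metric: u • v := g̃((g̃*u) • (g̃*v)). -/
def formMul (g' : Met n) (c : Mul2 n) (u v : OneForm n) : OneForm n :=
  mdown g' (mapp c (mup g' u) (mup g' v))

/-- Lie derivative of a function. -/
def lieFun (E : VF n) (φ : Pt n → ℝ) : Pt n → ℝ :=
  fun t => ∑ i, E t i * pder i φ t

/-- Lie derivative of a 1-form: (L_E α)(X) = E(α(X)) − α([E,X]). -/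
def lieOne (E : VF n) (α : OneForm n) : OneForm n :=
  fun t k => (∑ i, E t i * pder i (fun s => α s k) t) + ∑ i, α t i * pder k (fun s => E s i) t

/-- Lie derivative of a metric: (L_E g)(X,Y) = E(g(X,Y)) − g([E,X],Y) − g(X,[E,Y]). -/
def lieMet (E : VF n) (g : Met n) : Met n := fun t =>
  Matrix.of fun k j =>
    (∑ i, E t i * pder i (fun s => g s k j) t)
    + (∑ i, g t i j * pder k (fun s => E s i) t)
    + (∑ i, g t k i * pder j (fun s => E s i) t)

/-- Lie derivative of a multiplication ((1,2)-tensor):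
(L_E c)(u,v) = L_E(c(u,v)) − c(L_E u, v) − c(u, L_E v), componentwise. -/
def lieMul (E : VF n) (c : Mul2 n) : Mul2 n :=
  fun t k i j =>
    vbr E (mapp c (fun _ => Pi.single i 1) (fun _ => Pi.single j 1)) t k
    - mapp c (vbr E (fun _ => Pi.single i 1)) (fun _ => Pi.single j 1) t k
    - mapp c (fun _ => Pi.single i 1) (vbr E (fun _ => Pi.single j 1)) t k

/-- Lie derivative of a multiplication on 1-forms (applied to the pencil multiplication ∘). -/
def lieCirc (E : VF n) (g g' : Met n) (u v : OneForm n) : OneForm n :=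
  fun t k => lieOne E (circM g g' u v) t k - circM g g' (lieOne E u) v t k
    - circM g g' u (lieOne E v) t k

/-- ∇^g_X(•)(Y,Z) := ∇^g_X(Y•Z) − (∇^g_X Y)•Z − Y•(∇^g_X Z), for a multiplication c. -/
def covMul (g : Met n) (c : Mul2 n) (X Y Z : VF n) : VF n :=
  fun t k => covV g X (mapp c Y Z) t k - mapp c (covV g X Y) Z t k
    - mapp c Y (covV g X Z) t k

/-- The (4,0)-tensor ∇^g(•)(X,Y,Z,V) := g(∇^g_X(•)(Y,Z), V). -/
def covMul4 (g : Met n) (c : Mul2 n) (X Y Z V : VF n) (t : Pt n) : ℝ :=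
  mdown2 g (covMul g c X Y Z) V t

/-- Total symmetry of the (4,0)-tensor ∇^g(•) (the F-manifold condition). -/
def TotSym (U : Set (Pt n)) (g : Met n) (c : Mul2 n) : Prop :=
  ∀ X Y Z V : VF n, SmoothVF U X → SmoothVF U Y → SmoothVF U Z → SmoothVF U V →
    ∀ t ∈ U,
      covMul4 g c X Y Z V t = covMul4 g c Y X Z V t ∧
      covMul4 g c X Y Z V t = covMul4 g c X Z Y V t ∧
      covMul4 g c X Y Z V t = covMul4 g c X Y V Z t

/-- Weak F-manifold structure (U, •, g̃, E), with identity `e`, •-inverse `Einv` of E,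
and rescaling functions `Dt` (for the metric) and `k` (for the multiplication). -/
structure IsWeakF (U : Set (Pt n)) (c : Mul2 n) (g' : Met n) (E e Einv : VF n)
    (Dt k : Pt n → ℝ) : Prop where
  met : IsMetricOn U g'
  smooth_c : SmoothMul2 U c
  smooth_E : SmoothVF U E
  smooth_e : SmoothVF U e
  smooth_Einv : SmoothVF U Einv
  smooth_Dt : ContDiffOn ℝ (⊤ : ℕ∞) Dt U
  smooth_k : ContDiffOn ℝ (⊤ : ℕ∞) k U
  comm : ∀ t ∈ U, ∀ a i j, c t a i j = c t a j i
  assoc : ∀ t ∈ U, ∀ a x y z, (∑ m, c t a m z * c t m x y) = ∑ m, c t a x m * c t m y z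
  unit : ∀ t ∈ U, ∀ a i, (∑ j, c t a j i * e t j) = if a = i then (1 : ℝ) else 0
  invar : ∀ t ∈ U, ∀ x y z, (∑ m, g' t m z * c t m x y) = ∑ m, g' t x m * c t m y z
  lie_g : ∀ t ∈ U, ∀ i j, lieMet E g' t i j = Dt t * g' t i j
  lie_c : ∀ t ∈ U, ∀ a i j, lieMul E c t a i j = k t * c t a i j
  e_inv : ∀ t ∈ U, ∀ a, (∑ i, ∑ j, c t a i j * E t i * Einv t j) = e t a
  sym_E : ∀ Y Z V : VF n, SmoothVF U Y → SmoothVF U Z → SmoothVF U V → ∀ t ∈ U,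
    covMul4 g' c E Y Z V t = covMul4 g' c Y E Z V t

/-- Weak quasi-homogeneous pencil (h, h̃) with Euler vector field E. -/
structure IsWQH (U : Set (Pt n)) (h h' : Met n) (E : VF n) (D Dt : Pt n → ℝ) : Prop where
  met_h : IsMetricOn U h
  met_h' : IsMetricOn U h'
  compat : Compatible U h h'
  smooth_E : SmoothVF U E
  smooth_D : ContDiffOn ℝ (⊤ : ℕ∞) D U
  smooth_Dt : ContDiffOn ℝ (⊤ : ℕ∞) Dt U
  lie_h' : ∀ t ∈ U, ∀ i j, lieMet E h' t i j = Dt t * h' t i j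
  cov_E : ∀ X : VF n, SmoothVF U X → ∀ t ∈ U, ∀ a, covV h X E t a = (D t / 2) * X t a
  diff_const : ∃ c₀ : ℝ, ∀ t ∈ U, Dt t - D t = c₀

/-- Frobenius manifold structure (U, •, g̃, E). -/
structure IsFrob (U : Set (Pt n)) (c : Mul2 n) (g' : Met n) (E e : VF n) (D k : ℝ) : Prop where
  met : IsMetricOn U g'
  flat : FlatOn U g'
  smooth_c : SmoothMul2 U c
  smooth_E : SmoothVF U E
  smooth_e : SmoothVF U e
  comm : ∀ t ∈ U, ∀ a i j, c t a i j = c t a j i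
  assoc : ∀ t ∈ U, ∀ a x y z, (∑ m, c t a m z * c t m x y) = ∑ m, c t a x m * c t m y z
  unit : ∀ t ∈ U, ∀ a i, (∑ j, c t a j i * e t j) = if a = i then (1 : ℝ) else 0
  invar : ∀ t ∈ U, ∀ x y z, (∑ m, g' t m z * c t m x y) = ∑ m, g' t x m * c t m y z
  e_par : ∀ X : VF n, SmoothVF U X → ∀ t ∈ U, ∀ a, covV g' X e t a = 0
  tot_sym : TotSym U g' c
  nabla2E : ∀ X Y : VF n, SmoothVF U X → SmoothVF U Y → ∀ t ∈ U, ∀ a,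
    covV g' X (covV g' Y E) t a - covV g' (covV g' X Y) E t a = 0
  lie_g : ∀ t ∈ U, ∀ i j, lieMet E g' t i j = D * g' t i j
  lie_c : ∀ t ∈ U, ∀ a i j, lieMul E c t a i j = k * c t a i j

/-- The intersection metric `g` of a Frobenius manifold: g*g̃ = E•, together with
its standard properties. -/
structure IsIntersection (U : Set (Pt n)) (c : Mul2 n) (g g' : Met n) (E : VF n)
    (d : ℝ) : Prop where
  met : IsMetricOn U g
  defn : ∀ t ∈ U, ∀ a j, (∑ l, (g t)⁻¹ a l * g' t l j) = ∑ i, c t a i j * E t i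
  lie_g : ∀ t ∈ U, ∀ i j, lieMet E g t i j = (1 - d) * g t i j
  compat : Compatible U g g'
  regular : RegularTriple U g g' E
  mul_eq : ∀ t ∈ U, ∀ a i j, bulMul g g' E t a i j = c t a i j

/-!
Symmetry of `∇(•)` in `E`, evaluated on the identity `e`, says `E • ∇_x e = x • ∇_E e`. As `E` is
invertible, `∇_x e = x • w` for a fixed `w`, and by invariance `L_e g` has the form
`(x, y) ↦ θ (x • y)` for a 1-form `θ`. Such forms are preserved by `L_E`, since `L_E(•) = k •`.
Applying `L_E` to `e • e = e` gives `[E, e] = -k e`. Comparing the two sides of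
`L_[E,e] g = L_E L_e g - L_e L_E g` then shows that `dk ⊗ η + η ⊗ dk`, where `η = g(e)`, is again
of the form `v (x • y)`.

In dimension at least three some `z ≠ 0` is killed by both `dk` and `η`, so `v (z • x) = 0` for
all `x`. If `dk ≠ 0`, there are `y` and `r ≠ 0` with `dk(y) η + η(y) dk = r η`, so that
`r η (z • x) = v (y • (z • x)) = v (z • (y • x)) = 0` for all `x`, against nondegeneracy of
`g(z, x) = η (z • x)`. Hence `dk = 0`.
-/

open scoped Matrix Topology
open VectorField

/-! ### Directional derivatives -/

theorem lieFun_eq_fderiv (X : VF n) (f : Pt n → ℝ) (t : Pt n) :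
    lieFun X f t = fderiv ℝ f t (X t) := by
  conv_rhs => rw [pi_eq_sum_univ' (X t), map_sum]
  refine Finset.sum_congr rfl fun i _ => ?_
  rw [map_smul, smul_eq_mul, pder]

theorem pder_eq_lieFun (i : Fin n) (f : Pt n → ℝ) :
    pder i f = lieFun (fun _ => Pi.single i 1) f :=
  funext fun t => (lieFun_eq_fderiv (fun _ => Pi.single i 1) f t).symm

theorem lieFun_congr (X : VF n) {f h : Pt n → ℝ} {t : Pt n} (hfh : f =ᶠ[𝓝 t] h) :
    lieFun X f t = lieFun X h t := by
  rw [lieFun_eq_fderiv, lieFun_eq_fderiv, hfh.fderiv_eq]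

theorem lieFun_add (X : VF n) {f h : Pt n → ℝ} {t : Pt n} (hf : DifferentiableAt ℝ f t)
    (hh : DifferentiableAt ℝ h t) :
    lieFun X (fun s => f s + h s) t = lieFun X f t + lieFun X h t := by
  simp only [lieFun_eq_fderiv, fderiv_fun_add hf hh, add_apply]

theorem lieFun_sub (X : VF n) {f h : Pt n → ℝ} {t : Pt n} (hf : DifferentiableAt ℝ f t)
    (hh : DifferentiableAt ℝ h t) :
    lieFun X (fun s => f s - h s) t = lieFun X f t - lieFun X h t := by
  simp only [lieFun_eq_fderiv, fderiv_fun_sub hf hh, sub_apply]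

theorem lieFun_mul (X : VF n) {f h : Pt n → ℝ} {t : Pt n} (hf : DifferentiableAt ℝ f t)
    (hh : DifferentiableAt ℝ h t) :
    lieFun X (fun s => f s * h s) t = lieFun X f t * h t + f t * lieFun X h t := by
  simp only [lieFun_eq_fderiv, fderiv_fun_mul hf hh, add_apply,
    smul_apply, smul_eq_mul]
  ring

theorem lieFun_sum {ι : Type*} (X : VF n) (s : Finset ι) {f : ι → Pt n → ℝ} {t : Pt n}
    (hf : ∀ a ∈ s, DifferentiableAt ℝ (f a) t) :
    lieFun X (fun s' => ∑ a ∈ s, f a s') t = ∑ a ∈ s, lieFun X (f a) t := by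
  simp only [lieFun_eq_fderiv, fderiv_fun_sum hf, sum_apply]

theorem lieFun_const (X : VF n) (r : ℝ) (t : Pt n) : lieFun X (fun _ => r) t = 0 := by
  simp [lieFun_eq_fderiv]

theorem differentiableAt_lieFun {X : VF n} {f : Pt n → ℝ} {t : Pt n}
    (hX : DifferentiableAt ℝ X t) (hf : ContDiffAt ℝ 2 f t) :
    DifferentiableAt ℝ (lieFun X f) t := by
  have hf' : DifferentiableAt ℝ (fderiv ℝ f) t :=
    (hf.fderiv_right (m := 1) (by norm_num)).differentiableAt one_ne_zero
  simpa only [funext (lieFun_eq_fderiv X f)] using hf'.clm_apply hX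

theorem differentiableAt_pder {f : Pt n → ℝ} {t : Pt n} (i : Fin n) (hf : ContDiffAt ℝ 2 f t) :
    DifferentiableAt ℝ (pder i f) t :=
  pder_eq_lieFun i f ▸ differentiableAt_lieFun (differentiableAt_const _) hf

theorem vbr_apply (X Y : VF n) (t : Pt n) (a : Fin n) :
    vbr X Y t a = lieFun X (fun s => Y s a) t - lieFun Y (fun s => X s a) t :=
  Finset.sum_sub_distrib ..

theorem vbr_eq_lieBracket {X Y : VF n} {t : Pt n} (hX : DifferentiableAt ℝ X t)
    (hY : DifferentiableAt ℝ Y t) : vbr X Y t = lieBracket ℝ X Y t := by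
  ext a
  rw [vbr_apply, lieFun_eq_fderiv, lieFun_eq_fderiv, fderiv_apply hX, fderiv_apply hY]
  rfl

theorem lieFun_vbr {X Y : VF n} {f : Pt n → ℝ} {t : Pt n} (hX : DifferentiableAt ℝ X t)
    (hY : DifferentiableAt ℝ Y t) (hf : ContDiffAt ℝ 2 f t) :
    lieFun (vbr X Y) f t = lieFun X (lieFun Y f) t - lieFun Y (lieFun X f) t := by
  simp only [lieFun_eq_fderiv, vbr_eq_lieBracket hX hY, funext (lieFun_eq_fderiv _ f)]
  exact fderiv_apply_lieBracket hf (by simp) hY hX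

theorem vbr_single (i : Fin n) (X : VF n) :
    vbr (fun _ => Pi.single i 1) X = fun t a => pder i (fun s => X s a) t := by
  ext t a
  rw [vbr_apply, lieFun_const, sub_zero, pder_eq_lieFun]

theorem pder_lieFun {X : VF n} {f : Pt n → ℝ} {t : Pt n} (i : Fin n)
    (hX : DifferentiableAt ℝ X t) (hf : ContDiffAt ℝ 2 f t) :
    pder i (lieFun X f) t
      = lieFun X (pder i f) t + lieFun (fun s a => pder i (fun r => X r a) s) f t := by
  rw [← vbr_single, lieFun_vbr (differentiableAt_const _) hX hf, ← pder_eq_lieFun,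
    ← pder_eq_lieFun]
  ring

/-! ### The Lie derivative of a metric -/

/-- The Jacobian matrix of a vector field, with entries `∂_i X^a` in row `a` and column `i`. -/
def jacobian (X : VF n) (t : Pt n) : Matrix (Fin n) (Fin n) ℝ :=
  .of fun a i => pder i (fun s => X s a) t

/-- The entrywise directional derivative of a matrix of functions along a vector field. -/
def lieEntries (X : VF n) (M : Met n) : Met n :=
  fun t => .of fun i j => lieFun X (fun s => M s i j) t

theorem lieEntries_add (X : VF n) {A B : Met n} {t : Pt n}
    (hA : ∀ i j, DifferentiableAt ℝ (fun s => A s i j) t)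
    (hB : ∀ i j, DifferentiableAt ℝ (fun s => B s i j) t) :
    lieEntries X (fun s => A s + B s) t = lieEntries X A t + lieEntries X B t := by
  ext i j
  exact lieFun_add X (hA i j) (hB i j)

theorem differentiableAt_matrix_mul {A B : Met n} {t : Pt n}
    (hA : ∀ i j, DifferentiableAt ℝ (fun s => A s i j) t)
    (hB : ∀ i j, DifferentiableAt ℝ (fun s => B s i j) t) (i j : Fin n) :
    DifferentiableAt ℝ (fun s => (A s * B s) i j) t := by
  simp only [Matrix.mul_apply]
  exact .fun_sum fun a _ => (hA i a).mul (hB a j)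

theorem lieEntries_mul (X : VF n) {A B : Met n} {t : Pt n}
    (hA : ∀ i j, DifferentiableAt ℝ (fun s => A s i j) t)
    (hB : ∀ i j, DifferentiableAt ℝ (fun s => B s i j) t) :
    lieEntries X (fun s => A s * B s) t = lieEntries X A t * B t + A t * lieEntries X B t := by
  ext i j
  simp only [lieEntries, Matrix.of_apply, Matrix.add_apply, Matrix.mul_apply]
  rw [lieFun_sum X _ fun a _ => (hA i a).fun_mul (hB a j), ← Finset.sum_add_distrib]
  exact Finset.sum_congr rfl fun a _ => lieFun_mul X (hA i a) (hB a j)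

theorem lieEntries_vbr {X Y : VF n} {M : Met n} {t : Pt n} (hX : DifferentiableAt ℝ X t)
    (hY : DifferentiableAt ℝ Y t) (hM : ∀ i j, ContDiffAt ℝ 2 (fun s => M s i j) t) :
    lieEntries (vbr X Y) M t
      = lieEntries X (lieEntries Y M) t - lieEntries Y (lieEntries X M) t := by
  ext i j
  exact lieFun_vbr hX hY (hM i j)

theorem jacobian_vbr {X Y : VF n} {t : Pt n} (hX : ContDiffAt ℝ 2 X t)
    (hY : ContDiffAt ℝ 2 Y t) :
    jacobian (vbr X Y) t = lieEntries X (jacobian Y) t - lieEntries Y (jacobian X) t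
      + jacobian Y t * jacobian X t - jacobian X t * jacobian Y t := by
  have dX := hX.differentiableAt two_ne_zero
  have dY := hY.differentiableAt two_ne_zero
  have hXa := contDiffAt_pi.1 hX
  have hYa := contDiffAt_pi.1 hY
  ext a i
  have h : pder i (fun s => vbr X Y s a) t
      = pder i (lieFun X fun s => Y s a) t - pder i (lieFun Y fun s => X s a) t := by
    simp only [vbr_apply, pder_eq_lieFun i]
    exact lieFun_sub _ (differentiableAt_lieFun dX (hYa a)) (differentiableAt_lieFun dY (hXa a))
  rw [pder_lieFun i dX (hYa a), pder_lieFun i dY (hXa a)] at h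
  simp only [jacobian, lieEntries, Matrix.sub_apply, Matrix.add_apply, Matrix.mul_apply,
    Matrix.of_apply, h]
  simp only [lieFun, mul_comm]
  ring

theorem lieMet_eq (X : VF n) (g : Met n) (t : Pt n) :
    lieMet X g t = lieEntries X g t + (jacobian X t)ᵀ * g t + g t * jacobian X t := by
  ext i j
  simp only [lieMet, lieEntries, lieFun, jacobian, Matrix.add_apply, Matrix.mul_apply,
    Matrix.transpose_apply, Matrix.of_apply, mul_comm]

theorem lieEntries_lieMet {X Y : VF n} {g : Met n} {t : Pt n}
    (hY : ContDiffAt ℝ 2 Y t) (hg : ∀ i j, ContDiffAt ℝ 2 (fun s => g s i j) t) :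
    lieEntries X (lieMet Y g) t = lieEntries X (lieEntries Y g) t
      + ((lieEntries X (jacobian Y) t)ᵀ * g t + (jacobian Y t)ᵀ * lieEntries X g t)
      + (lieEntries X g t * jacobian Y t + g t * lieEntries X (jacobian Y) t) := by
  have dg (i j) : DifferentiableAt ℝ (fun s => g s i j) t :=
    (hg i j).differentiableAt two_ne_zero
  have dJ (i j) : DifferentiableAt ℝ (fun s => jacobian Y s i j) t :=
    differentiableAt_pder j (contDiffAt_pi.1 hY i)
  have dL (i j) : DifferentiableAt ℝ (fun s => lieEntries Y g s i j) t :=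
    differentiableAt_lieFun (hY.differentiableAt two_ne_zero) (hg i j)
  have dJg := differentiableAt_matrix_mul (A := fun s => (jacobian Y s)ᵀ) (fun i j => dJ j i) dg
  have dgJ := differentiableAt_matrix_mul dg dJ
  have dLJg (i j) : DifferentiableAt ℝ
      (fun s => (lieEntries Y g s + (jacobian Y s)ᵀ * g s) i j) t := (dL i j).add (dJg i j)
  rw [funext (lieMet_eq Y g), lieEntries_add X dLJg dgJ, lieEntries_add X dL dJg,
    lieEntries_mul X (A := fun s => (jacobian Y s)ᵀ) (fun i j => dJ j i) dg,
    lieEntries_mul X dg dJ]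
  rfl

theorem lieMet_vbr {X Y : VF n} {g : Met n} {t : Pt n} (hX : ContDiffAt ℝ 2 X t)
    (hY : ContDiffAt ℝ 2 Y t) (hg : ∀ i j, ContDiffAt ℝ 2 (fun s => g s i j) t) :
    lieMet (vbr X Y) g t = lieMet X (lieMet Y g) t - lieMet Y (lieMet X g) t := by
  have dX := hX.differentiableAt two_ne_zero
  have dY := hY.differentiableAt two_ne_zero
  rw [lieMet_eq X (lieMet Y g), lieMet_eq Y (lieMet X g), lieEntries_lieMet hY hg,
    lieEntries_lieMet hX hg, lieMet_eq (vbr X Y), lieEntries_vbr dX dY hg,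
    jacobian_vbr hX hY, lieMet_eq X g, lieMet_eq Y g]
  simp only [Matrix.transpose_add, Matrix.transpose_sub, Matrix.transpose_mul]
  noncomm_ring

theorem lieMet_congr (X : VF n) {g h : Met n} {t : Pt n} (hgh : g =ᶠ[𝓝 t] h) :
    lieMet X g t = lieMet X h t := by
  have hL : lieEntries X g t = lieEntries X h t := by
    ext i j
    exact lieFun_congr X (hgh.fun_comp fun M => M i j)
  rw [lieMet_eq, lieMet_eq, hL, hgh.eq_of_nhds]

theorem jacobian_congr {X Y : VF n} {t : Pt n} (hXY : X =ᶠ[𝓝 t] Y) :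
    jacobian X t = jacobian Y t := by
  ext a i
  simpa only [jacobian, Matrix.of_apply, pder_eq_lieFun, Function.comp_def]
    using lieFun_congr _ (hXY.fun_comp fun v => v a)

theorem lieMet_congr_vector {X Y : VF n} (g : Met n) {t : Pt n} (hXY : X =ᶠ[𝓝 t] Y) :
    lieMet X g t = lieMet Y g t := by
  have hL : lieEntries X g t = lieEntries Y g t := by
    ext i j
    simp only [lieEntries, Matrix.of_apply, lieFun, hXY.eq_of_nhds]
  rw [lieMet_eq, lieMet_eq, hL, jacobian_congr hXY]

theorem lieMet_smul (X : VF n) {φ : Pt n → ℝ} {g : Met n} {t : Pt n}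
    (hφ : DifferentiableAt ℝ φ t) (hg : ∀ i j, DifferentiableAt ℝ (fun s => g s i j) t) :
    lieMet X (fun s => φ s • g s) t = lieFun X φ t • g t + φ t • lieMet X g t := by
  have hL : lieEntries X (fun s => φ s • g s) t
      = lieFun X φ t • g t + φ t • lieEntries X g t := by
    ext i j
    exact lieFun_mul X hφ (hg i j)
  simp only [lieMet_eq, hL, smul_add, Matrix.mul_smul, Matrix.smul_mul, add_assoc]

/-- The differential `dφ` of a function, as a 1-form. -/
def differential (φ : Pt n → ℝ) : OneForm n :=
  fun t i => pder i φ t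

theorem jacobian_smul {φ : Pt n → ℝ} {X : VF n} {t : Pt n} (hφ : DifferentiableAt ℝ φ t)
    (hX : DifferentiableAt ℝ X t) :
    jacobian (fun s => φ s • X s) t
      = φ t • jacobian X t + Matrix.vecMulVec (X t) (differential φ t) := by
  ext a i
  have h := lieFun_mul (fun _ => Pi.single i 1) hφ (differentiableAt_pi.1 hX a)
  rw [← pder_eq_lieFun, ← pder_eq_lieFun, ← pder_eq_lieFun] at h
  simp only [jacobian, differential, Matrix.of_apply, Matrix.add_apply, Matrix.smul_apply,
    Pi.smul_apply, smul_eq_mul, Matrix.vecMulVec_apply, h]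
  ring

theorem lieMet_smul_vector {φ : Pt n → ℝ} {X : VF n} (g : Met n) {t : Pt n}
    (hφ : DifferentiableAt ℝ φ t) (hX : DifferentiableAt ℝ X t) :
    lieMet (fun s => φ s • X s) g t = φ t • lieMet X g t
      + Matrix.vecMulVec (differential φ t) (X t ᵥ* g t)
      + Matrix.vecMulVec (g t *ᵥ X t) (differential φ t) := by
  have hL : lieEntries (fun s => φ s • X s) g t = φ t • lieEntries X g t := by
    ext i j
    simp only [lieEntries, lieFun, Matrix.of_apply, Matrix.smul_apply, Pi.smul_apply, smul_eq_mul,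
      Finset.mul_sum, mul_assoc]
  rw [lieMet_eq, lieMet_eq, hL, jacobian_smul hφ hX, Matrix.transpose_add, Matrix.transpose_smul,
    Matrix.transpose_vecMulVec, add_mul, mul_add, Matrix.vecMulVec_mul, Matrix.mul_vecMulVec,
    Matrix.smul_mul, Matrix.mul_smul, smul_add, smul_add]
  abel

theorem differentiableAt_lieMet {X : VF n} {g : Met n} {t : Pt n} (hX : ContDiffAt ℝ 2 X t)
    (hg : ∀ i j, ContDiffAt ℝ 2 (fun s => g s i j) t) (i j : Fin n) :
    DifferentiableAt ℝ (fun s => lieMet X g s i j) t := by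
  have dg (i j) := (hg i j).differentiableAt two_ne_zero
  have dJ (i j) := differentiableAt_pder j (contDiffAt_pi.1 hX i)
  have dL := differentiableAt_lieFun (hX.differentiableAt two_ne_zero) (hg i j)
  exact (dL.fun_add (.fun_sum fun a _ => (dg a j).fun_mul (dJ a i))).fun_add
    (.fun_sum fun a _ => (dg i a).fun_mul (dJ a j))

/-! ### Structure constants -/

section StructureConstants

variable {ι R : Type*} [Fintype ι] [CommRing R]

/-- The product `x • y` of vectors for the multiplication with structure constants
`C k i j`, the `k`-th component of the product of the `i`-th and `j`-th basis vectors. -/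
def structMul (C : ι → ι → ι → R) (x y : ι → R) : ι → R :=
  fun k => ∑ i, ∑ j, C k i j * x i * y j

/-- The contraction of a covector `θ` with structure constants: the matrix of the bilinear form
`(x, y) ↦ θ (x • y)`. -/
def contract (C : ι → ι → ι → R) : (ι → R) →ₗ[R] Matrix ι ι R :=
  Fintype.linearCombination R fun m => Matrix.of (C m)

theorem contract_apply (C : ι → ι → ι → R) (θ : ι → R) (i j : ι) :
    contract C θ i j = ∑ m, θ m * C m i j := by
  simp [contract, Fintype.linearCombination_apply, Matrix.sum_apply]

theorem structMul_sub_left (C : ι → ι → ι → R) (x x' y : ι → R) :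
    structMul C (x - x') y = structMul C x y - structMul C x' y := by
  ext k
  simp [structMul, mul_sub, sub_mul]

theorem structMul_sub_right (C : ι → ι → ι → R) (x y y' : ι → R) :
    structMul C x (y - y') = structMul C x y - structMul C x y' := by
  ext k
  simp [structMul, mul_sub]

theorem dotProduct_structMul (C : ι → ι → ι → R) (θ x y : ι → R) :
    θ ⬝ᵥ structMul C x y = x ⬝ᵥ contract C θ *ᵥ y := by
  simp only [dotProduct, structMul, Matrix.mulVec, contract_apply, Finset.mul_sum, Finset.sum_mul]
  rw [Finset.sum_comm]
  refine Finset.sum_congr rfl fun i _ => ?_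
  rw [Finset.sum_comm]
  exact Finset.sum_congr rfl fun j _ => Finset.sum_congr rfl fun m _ => by ring

theorem structMul_apply_eq_dotProduct (C : ι → ι → ι → R) (x y : ι → R) (k : ι) :
    structMul C x y k = x ⬝ᵥ Matrix.of (C k) *ᵥ y := by
  simp only [structMul, dotProduct, Matrix.mulVec, Matrix.of_apply, Finset.mul_sum]
  exact Finset.sum_congr rfl fun i _ => Finset.sum_congr rfl fun j _ => by ring

theorem structMul_dotProduct_mulVec {C : ι → ι → ι → R} {M : Matrix ι ι R}
    (hM : ∀ i j l, ∑ m, M m l * C m i j = ∑ m, M i m * C m j l) (x y z : ι → R) :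
    structMul C x y ⬝ᵥ M *ᵥ z = x ⬝ᵥ M *ᵥ structMul C y z := by
  rw [dotProduct_comm, dotProduct_structMul]
  congr 1
  ext i
  calc (contract C (M *ᵥ z) *ᵥ y) i
      = ∑ j, ∑ l, (∑ m, M m l * C m i j) * (y j * z l) := by
        simp only [Matrix.mulVec, dotProduct, contract_apply, Finset.sum_mul]
        refine Finset.sum_congr rfl fun j _ => ?_
        rw [Finset.sum_comm]
        exact Finset.sum_congr rfl fun l _ => Finset.sum_congr rfl fun m _ => by ring
    _ = ∑ j, ∑ l, (∑ m, M i m * C m j l) * (y j * z l) := by simp only [hM]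
    _ = contract C (M i) *ᵥ z ⬝ᵥ y := by
        simp only [Matrix.mulVec, dotProduct, contract_apply, Finset.sum_mul]
        refine Finset.sum_congr rfl fun j _ => ?_
        exact Finset.sum_congr rfl fun l _ => Finset.sum_congr rfl fun m _ => by ring
    _ = (M *ᵥ structMul C y z) i := by
        rw [dotProduct_comm, ← dotProduct_structMul, Matrix.mulVec]

theorem eq_contract_of_dotProduct_eq {C : ι → ι → ι → R} {M : Matrix ι ι R}
    {θ : ι → R} (h : ∀ x y, x ⬝ᵥ M *ᵥ y = θ ⬝ᵥ structMul C x y) : M = contract C θ := by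
  classical
  ext i j
  simpa [dotProduct_structMul] using h (Pi.single i 1) (Pi.single j 1)

theorem smul_structMul (r : R) (C : ι → ι → ι → R) (x y : ι → R) :
    structMul (r • C) x y = r • structMul C x y := by
  ext k
  simp only [structMul, Pi.smul_apply, smul_eq_mul, Finset.mul_sum, mul_assoc]

theorem smul_contract (r : R) (C : ι → ι → ι → R) (θ : ι → R) :
    contract (r • C) θ = r • contract C θ := by
  ext i j
  simp only [contract_apply, Matrix.smul_apply, Pi.smul_apply, smul_eq_mul, Finset.mul_sum]
  exact Finset.sum_congr rfl fun m _ => by ring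

end StructureConstants

/-! ### The Lie derivative of a multiplication -/

theorem vbr_eq_sub_jacobian_mulVec (E X : VF n) (t : Pt n) :
    vbr E X t = (fun a => lieFun E (fun s => X s a) t) - jacobian E t *ᵥ X t := by
  ext a
  rw [vbr_apply, Pi.sub_apply]
  simp only [lieFun, jacobian, Matrix.mulVec, dotProduct, Matrix.of_apply, mul_comm]

theorem lieOne_eq (E : VF n) (θ : OneForm n) (t : Pt n) :
    lieOne E θ t = (fun m => lieFun E (fun s => θ s m) t) + θ t ᵥ* jacobian E t :=
  rfl

theorem lieMul_apply (E : VF n) (c : Mul2 n) (t : Pt n) (a i j : Fin n) :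
    lieMul E c t a i j = lieFun E (fun s => c s a i j) t
      - ∑ b, jacobian E t a b * c t b i j + ∑ b, jacobian E t b i * c t a b j
      + ∑ b, jacobian E t b j * c t a i b := by
  have hc : mapp c (fun _ => Pi.single i 1) (fun _ => Pi.single j 1) = fun s a => c s a i j := by
    ext s a
    simp [mapp, Pi.single_apply]
  have hv (i : Fin n) : vbr E (fun _ => Pi.single i 1) = fun s b => - jacobian E s b i := by
    ext s b
    simp [vbr_apply, lieFun_const, jacobian, pder_eq_lieFun]
  simp only [lieMul, hc, hv, vbr_eq_sub_jacobian_mulVec]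
  simp [mapp, Pi.single_apply, Matrix.mulVec, dotProduct, mul_comm]

theorem contract_lieMul (E : VF n) (c : Mul2 n) (t : Pt n) (θ : Fin n → ℝ) :
    contract (lieMul E c t) θ = contract (fun a i j => lieFun E (fun s => c s a i j) t) θ
      - contract (c t) (θ ᵥ* jacobian E t) + (jacobian E t)ᵀ * contract (c t) θ
      + contract (c t) θ * jacobian E t := by
  ext i j
  simp only [contract_apply, lieMul_apply, Matrix.add_apply, Matrix.sub_apply, Matrix.mul_apply,
    Matrix.transpose_apply, Matrix.vecMul, dotProduct, mul_add, mul_sub, Finset.sum_add_distrib,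
    Finset.sum_sub_distrib, Finset.mul_sum, Finset.sum_mul]
  congr 1
  · congr 1
    · congr 1
      exact Finset.sum_comm.trans (by simp only [mul_assoc])
    · exact Finset.sum_comm.trans (by simp only [mul_left_comm])
  · exact Finset.sum_comm.trans (by simp only [mul_assoc, mul_comm (jacobian E t _ _)])

theorem lieMet_contract (E : VF n) {c : Mul2 n} {θ : OneForm n} {t : Pt n}
    (hc : ∀ m i j, DifferentiableAt ℝ (fun s => c s m i j) t)
    (hθ : ∀ m, DifferentiableAt ℝ (fun s => θ s m) t) :
    lieMet E (fun s => contract (c s) (θ s)) t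
      = contract (c t) (lieOne E θ t) + contract (lieMul E c t) (θ t) := by
  have hL : lieEntries E (fun s => contract (c s) (θ s)) t
      = contract (c t) (fun m => lieFun E (fun s => θ s m) t)
        + contract (fun a i j => lieFun E (fun s => c s a i j) t) (θ t) := by
    ext i j
    simp only [lieEntries, Matrix.of_apply, Matrix.add_apply, contract_apply]
    rw [lieFun_sum E _ fun m _ => (hθ m).fun_mul (hc m i j), ← Finset.sum_add_distrib]
    exact Finset.sum_congr rfl fun m _ => lieFun_mul E (hθ m) (hc m i j)
  rw [lieMet_eq, hL, contract_lieMul, lieOne_eq, map_add]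
  abel

theorem structMul_lieMul (E : VF n) (c : Mul2 n) (t : Pt n) (x y : Fin n → ℝ) :
    structMul (lieMul E c t) x y
      = structMul (fun a i j => lieFun E (fun s => c s a i j) t) x y
        - jacobian E t *ᵥ structMul (c t) x y + structMul (c t) (jacobian E t *ᵥ x) y
        + structMul (c t) x (jacobian E t *ᵥ y) := by
  refine dotProduct_eq _ _ fun θ => ?_
  rw [dotProduct_comm _ θ, dotProduct_comm _ θ, dotProduct_structMul, contract_lieMul]
  simp only [dotProduct_add, dotProduct_sub, dotProduct_structMul, Matrix.dotProduct_mulVec θ,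
    Matrix.add_mulVec, Matrix.sub_mulVec, ← Matrix.mulVec_mulVec]
  rw [Matrix.dotProduct_mulVec x (jacobian E t)ᵀ, Matrix.vecMul_transpose]

theorem lieFun_mapp (E : VF n) {X Y : VF n} {c : Mul2 n} {t : Pt n}
    (hc : ∀ a i j, DifferentiableAt ℝ (fun s => c s a i j) t)
    (hX : DifferentiableAt ℝ X t) (hY : DifferentiableAt ℝ Y t) :
    (fun a => lieFun E (fun s => mapp c X Y s a) t)
      = structMul (fun a i j => lieFun E (fun s => c s a i j) t) (X t) (Y t)
        + structMul (c t) (fun a => lieFun E (fun s => X s a) t) (Y t)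
        + structMul (c t) (X t) (fun a => lieFun E (fun s => Y s a) t) := by
  have dX := differentiableAt_pi.1 hX
  have dY := differentiableAt_pi.1 hY
  have dcX (a i j) := (hc a i j).fun_mul (dX i)
  have dcXY (a i j) := (dcX a i j).fun_mul (dY j)
  ext a
  simp only [mapp, structMul, Pi.add_apply, ← Finset.sum_add_distrib]
  rw [lieFun_sum E _ fun i _ => .fun_sum fun j _ => dcXY a i j]
  refine Finset.sum_congr rfl fun i _ => ?_
  rw [lieFun_sum E _ fun j _ => dcXY a i j]
  refine Finset.sum_congr rfl fun j _ => ?_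
  rw [lieFun_mul E (dcX a i j) (dY j), lieFun_mul E (hc a i j) (dX i)]
  ring

theorem vbr_congr (E : VF n) {X Y : VF n} {t : Pt n} (hXY : X =ᶠ[𝓝 t] Y) :
    vbr E X t = vbr E Y t := by
  ext a
  have h : lieFun E (fun s => X s a) t = lieFun E (fun s => Y s a) t :=
    lieFun_congr E (hXY.fun_comp fun v => v a)
  rw [vbr_apply, vbr_apply, h]
  simp only [lieFun, hXY.eq_of_nhds]

theorem vbr_mapp {E X Y : VF n} {c : Mul2 n} {t : Pt n}
    (hc : ∀ a i j, DifferentiableAt ℝ (fun s => c s a i j) t)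
    (hX : DifferentiableAt ℝ X t) (hY : DifferentiableAt ℝ Y t) :
    vbr E (mapp c X Y) t = structMul (lieMul E c t) (X t) (Y t)
      + structMul (c t) (vbr E X t) (Y t) + structMul (c t) (X t) (vbr E Y t) := by
  have h := lieFun_mapp E hc hX hY
  simp only [vbr_eq_sub_jacobian_mulVec, h, structMul_lieMul, structMul_sub_left,
    structMul_sub_right]
  rw [show mapp c X Y t = structMul (c t) (X t) (Y t) from rfl]
  abel

/-! ### Frobenius algebras -/

theorem exists_mul_add_mul_eq_mul {K V : Type*} [Field K] [NeZero (2 : K)] [AddCommGroup V]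
    [Module K V] {p : V →ₗ[K] K} (hp : p ≠ 0) (ε : V →ₗ[K] K) :
    ∃ y, ∃ r ≠ 0, ∀ x, p y * ε x + p x * ε y = r * ε x := by
  by_cases hker : ∃ y, ε y = 0 ∧ p y ≠ 0
  · obtain ⟨y, hεy, hpy⟩ := hker
    exact ⟨y, p y, hpy, fun x => by rw [hεy, mul_zero, add_zero]⟩
  · push Not at hker
    obtain ⟨y, hpy⟩ : ∃ y, p y ≠ 0 := by
      by_contra! h
      exact hp (LinearMap.ext h)
    have hεy : ε y ≠ 0 := fun h => hpy (hker y h)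
    refine ⟨y, 2 * p y, mul_ne_zero two_ne_zero hpy, fun x => ?_⟩
    have hpx : p x = ε x / ε y * p y := by
      have h := hker (x - (ε x / ε y) • y) (by simp [hεy])
      rwa [map_sub, map_smul, smul_eq_mul, sub_eq_zero] at h
    rw [hpx]
    field_simp
    ring

theorem eq_zero_of_mul_add_mul_eq {K V : Type*} [Field K] [NeZero (2 : K)] [AddCommGroup V]
    [Module K V] (hV : 3 ≤ Module.finrank K V) {mul : V → V → V}
    (mul_comm : ∀ x y, mul x y = mul y x)
    (mul_assoc : ∀ x y z, mul (mul x y) z = mul x (mul y z)) {ε p : V →ₗ[K] K}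
    (hε : ∀ z, (∀ x, ε (mul z x) = 0) → z = 0) {v : V → K}
    (hv : ∀ x y, p x * ε y + p y * ε x = v (mul x y)) : p = 0 := by
  by_contra hp
  have : FiniteDimensional K V := Module.finite_of_finrank_pos (by omega)
  obtain ⟨z, hz, hz0⟩ : ∃ z ∈ LinearMap.ker (p.prod ε), z ≠ 0 := by
    refine Submodule.exists_mem_ne_zero_of_ne_bot (LinearMap.ker_ne_bot_of_finrank_lt ?_)
    rw [Module.finrank_prod, Module.finrank_self]
    omega
  obtain ⟨hpz, hεz⟩ : p z = 0 ∧ ε z = 0 := by simpa using hz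
  have hvz (x : V) : v (mul z x) = 0 := by rw [← hv, hpz, hεz, zero_mul, mul_zero, add_zero]
  obtain ⟨y, r, hr, hy⟩ := exists_mul_add_mul_eq_mul hp ε
  refine hz0 (hε z fun x => (mul_eq_zero_iff_left hr).1 ?_)
  calc r * ε (mul z x) = v (mul y (mul z x)) := by rw [← hy, hv]
    _ = v (mul z (mul y x)) := by rw [← mul_assoc, mul_comm y, mul_assoc]
    _ = 0 := hvz _

/-- A smooth field of commutative Frobenius algebras on the tangent spaces of `U`: a commutative
associative multiplication `c` with identity `e`, and a metric `g` invariant under it. -/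
structure IsFrobeniusOn (U : Set (Pt n)) (c : Mul2 n) (g : Met n) (e : VF n) : Prop where
  met : IsMetricOn U g
  smooth_c : SmoothMul2 U c
  smooth_e : SmoothVF U e
  comm : ∀ t ∈ U, ∀ a i j, c t a i j = c t a j i
  assoc : ∀ t ∈ U, ∀ a x y z, (∑ m, c t a m z * c t m x y) = ∑ m, c t a x m * c t m y z
  unit : ∀ t ∈ U, ∀ a i, (∑ j, c t a j i * e t j) = if a = i then (1 : ℝ) else 0
  invar : ∀ t ∈ U, ∀ x y z, (∑ m, g t m z * c t m x y) = ∑ m, g t x m * c t m y z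

theorem SmoothVF.contDiffAt_two {U : Set (Pt n)} (hU : IsOpen U) {X : VF n} (hX : SmoothVF U X)
    {t : Pt n} (ht : t ∈ U) : ContDiffAt ℝ 2 X t :=
  contDiffAt_pi.2 fun a => contDiffAt_infty.1 ((hX a).contDiffAt (hU.mem_nhds ht)) 2

theorem SmoothMet.contDiffAt_two {U : Set (Pt n)} (hU : IsOpen U) {g : Met n}
    (hg : SmoothMet U g) {t : Pt n} (ht : t ∈ U) (i j : Fin n) :
    ContDiffAt ℝ 2 (fun s => g s i j) t :=
  contDiffAt_infty.1 ((hg i j).contDiffAt (hU.mem_nhds ht)) 2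

theorem SmoothMul2.differentiableAt {U : Set (Pt n)} (hU : IsOpen U) {c : Mul2 n}
    (hc : SmoothMul2 U c) {t : Pt n} (ht : t ∈ U) (a i j : Fin n) :
    DifferentiableAt ℝ (fun s => c s a i j) t :=
  ((hc a i j).contDiffAt (hU.mem_nhds ht)).differentiableAt (by simp)

namespace IsFrobeniusOn

variable {U : Set (Pt n)} {c : Mul2 n} {g : Met n} {e : VF n} {t : Pt n}

theorem structMul_comm (hF : IsFrobeniusOn U c g e) (ht : t ∈ U) (x y : Fin n → ℝ) :
    structMul (c t) x y = structMul (c t) y x := by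
  ext a
  simp only [structMul]
  rw [Finset.sum_comm]
  exact Finset.sum_congr rfl fun i _ => Finset.sum_congr rfl fun j _ => by
    rw [hF.comm t ht]; ring

theorem structMul_assoc (hF : IsFrobeniusOn U c g e) (ht : t ∈ U) (x y z : Fin n → ℝ) :
    structMul (c t) (structMul (c t) x y) z = structMul (c t) x (structMul (c t) y z) := by
  ext a
  rw [structMul_apply_eq_dotProduct, structMul_apply_eq_dotProduct]
  exact structMul_dotProduct_mulVec (hF.assoc t ht a) x y z

theorem one_structMul (hF : IsFrobeniusOn U c g e) (ht : t ∈ U) (x : Fin n → ℝ) :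
    structMul (c t) (e t) x = x := by
  ext a
  simp only [structMul]
  rw [Finset.sum_comm]
  simp only [← Finset.sum_mul, hF.unit t ht]
  simp

theorem structMul_one (hF : IsFrobeniusOn U c g e) (ht : t ∈ U) (x : Fin n → ℝ) :
    structMul (c t) x (e t) = x := by
  rw [hF.structMul_comm ht, hF.one_structMul ht]

theorem contract_mulVec_one (hF : IsFrobeniusOn U c g e) (ht : t ∈ U) (θ : Fin n → ℝ) :
    contract (c t) θ *ᵥ e t = θ := by
  refine dotProduct_eq _ _ fun x => ?_
  rw [dotProduct_comm, ← dotProduct_structMul, hF.structMul_one ht]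

theorem contract_mulVec_one_of_mem_range (hF : IsFrobeniusOn U c g e) (ht : t ∈ U)
    {M : Matrix (Fin n) (Fin n) ℝ} (hM : M ∈ LinearMap.range (contract (c t))) :
    contract (c t) (M *ᵥ e t) = M := by
  obtain ⟨θ, rfl⟩ := hM
  rw [hF.contract_mulVec_one ht]

theorem metric_eq_contract (hF : IsFrobeniusOn U c g e) (ht : t ∈ U) :
    g t = contract (c t) (g t *ᵥ e t) := by
  refine eq_contract_of_dotProduct_eq fun x y => ?_
  rw [← dotProduct_comm (structMul _ x y), structMul_dotProduct_mulVec (hF.invar t ht),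
    hF.structMul_one ht]

theorem vbr_one (hF : IsFrobeniusOn U c g e) (hU : IsOpen U) (ht : t ∈ U) {E : VF n} {r : ℝ}
    (hE : lieMul E c t = r • c t) : vbr E e t = -r • e t := by
  have de := (hF.smooth_e.contDiffAt_two hU ht).differentiableAt two_ne_zero
  have hee : mapp c e e =ᶠ[𝓝 t] e :=
    Filter.eventuallyEq_of_mem (hU.mem_nhds ht) fun s hs => hF.one_structMul hs (e s)
  have h := vbr_mapp (E := E) (hF.smooth_c.differentiableAt hU ht) de de
  rw [vbr_congr E hee, hE, smul_structMul, hF.one_structMul ht, hF.one_structMul ht,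
    hF.structMul_one ht, right_eq_add, add_eq_zero_iff_neg_eq] at h
  rw [neg_smul, h]

theorem lieMet_vbr_one (hF : IsFrobeniusOn U c g e) (hU : IsOpen U) {E : VF n} {k : Pt n → ℝ}
    (hk : DifferentiableOn ℝ k U) (lie_c : ∀ t ∈ U, lieMul E c t = k t • c t) (ht : t ∈ U) :
    lieMet (vbr E e) g t = -k t • lieMet e g t
      - (Matrix.vecMulVec (differential k t) (g t *ᵥ e t)
        + Matrix.vecMulVec (g t *ᵥ e t) (differential k t)) := by
  have hUt := hU.mem_nhds ht
  have de := (hF.smooth_e.contDiffAt_two hU ht).differentiableAt two_ne_zero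
  have hEe : vbr E e =ᶠ[𝓝 t] fun s => -k s • e s :=
    Filter.eventuallyEq_of_mem hUt fun s hs => hF.vbr_one hU hs (lie_c s hs)
  have hdk : differential (fun s => -k s) t = -differential k t := by
    ext i
    simp [differential, pder]
  rw [lieMet_congr_vector g hEe, lieMet_smul_vector g (hk.differentiableAt hUt).fun_neg de, hdk,
    ← Matrix.vecMul_transpose, (hF.met.2 t ht).1.eq, Matrix.neg_vecMulVec, Matrix.vecMulVec_neg]
  abel

theorem lieMet_lieMet_one_mem_range (hF : IsFrobeniusOn U c g e) (hU : IsOpen U) {E : VF n}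
    {r : ℝ} (lie_e : ∀ t ∈ U, lieMet e g t ∈ LinearMap.range (contract (c t))) (ht : t ∈ U)
    (hE : lieMul E c t = r • c t) :
    lieMet E (lieMet e g) t ∈ LinearMap.range (contract (c t)) := by
  have he := hF.smooth_e.contDiffAt_two hU ht
  have hg := hF.met.1.contDiffAt_two hU ht
  let θ : OneForm n := fun s => lieMet e g s *ᵥ e s
  have dθ (m) : DifferentiableAt ℝ (fun s => ∑ l, lieMet e g s m l * e s l) t :=
    .fun_sum fun l _ => (differentiableAt_lieMet he hg m l).fun_mul
      (differentiableAt_pi.1 (he.differentiableAt two_ne_zero) l)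
  have hθ : lieMet e g =ᶠ[𝓝 t] fun s => contract (c s) (θ s) :=
    Filter.eventuallyEq_of_mem (hU.mem_nhds ht) fun s hs =>
      (hF.contract_mulVec_one_of_mem_range hs (lie_e s hs)).symm
  rw [lieMet_congr E hθ, lieMet_contract E (θ := θ) (hF.smooth_c.differentiableAt hU ht) dθ, hE,
    smul_contract, ← map_smul, ← map_add]
  exact LinearMap.mem_range_self _ _

theorem vecMulVec_differential_mem_range (hF : IsFrobeniusOn U c g e) (hU : IsOpen U)
    {E : VF n} {D k : Pt n → ℝ} (hE : SmoothVF U E) (hD : DifferentiableOn ℝ D U)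
    (hk : DifferentiableOn ℝ k U) (lie_g : ∀ t ∈ U, lieMet E g t = D t • g t)
    (lie_c : ∀ t ∈ U, lieMul E c t = k t • c t)
    (lie_e : ∀ t ∈ U, lieMet e g t ∈ LinearMap.range (contract (c t))) (ht : t ∈ U) :
    Matrix.vecMulVec (differential k t) (g t *ᵥ e t)
      + Matrix.vecMulVec (g t *ᵥ e t) (differential k t) ∈ LinearMap.range (contract (c t)) := by
  have hUt := hU.mem_nhds ht
  have hg := hF.met.1.contDiffAt_two hU ht
  have heE : lieMet e (lieMet E g) t = lieFun e D t • g t + D t • lieMet e g t := by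
    rw [lieMet_congr e (Filter.eventuallyEq_of_mem hUt lie_g),
      lieMet_smul e (hD.differentiableAt hUt) fun i j => (hg i j).differentiableAt two_ne_zero]
  have hcomm := lieMet_vbr (hE.contDiffAt_two hU ht) (hF.smooth_e.contDiffAt_two hU ht) hg
  rw [hF.lieMet_vbr_one hU hk lie_c ht, heE, sub_eq_iff_eq_add, ← sub_eq_iff_eq_add'] at hcomm
  rw [← hcomm]
  have hg_mem : g t ∈ LinearMap.range (contract (c t)) := ⟨_, (hF.metric_eq_contract ht).symm⟩
  exact sub_mem (Submodule.smul_mem _ _ (lie_e t ht))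
    (sub_mem (hF.lieMet_lieMet_one_mem_range hU lie_e ht (lie_c t ht))
      (add_mem (Submodule.smul_mem _ _ hg_mem) (Submodule.smul_mem _ _ (lie_e t ht))))

theorem eq_zero_of_vecMulVec_mem_range (hF : IsFrobeniusOn U c g e) (hn : 3 ≤ n) (ht : t ∈ U)
    {p : Fin n → ℝ} (hp : Matrix.vecMulVec p (g t *ᵥ e t) + Matrix.vecMulVec (g t *ᵥ e t) p
      ∈ LinearMap.range (contract (c t))) : p = 0 := by
  obtain ⟨v, hv⟩ := hp
  have hε (x y : Fin n → ℝ) : g t *ᵥ e t ⬝ᵥ structMul (c t) x y = x ᵥ* g t ⬝ᵥ y := by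
    rw [dotProduct_structMul, ← hF.metric_eq_contract ht, Matrix.dotProduct_mulVec]
  have hp0 : dotProductBilin ℝ ℝ p = 0 := by
    refine eq_zero_of_mul_add_mul_eq (by simpa using hn) (hF.structMul_comm ht)
      (hF.structMul_assoc ht) (ε := dotProductBilin ℝ ℝ (g t *ᵥ e t)) (v := fun z => v ⬝ᵥ z)
      (fun z hz => ?_) fun x y => ?_
    · refine Matrix.vecMul_injective_of_isUnit (hF.met.2 t ht).2 (dotProduct_eq _ _ fun x => ?_)
      simpa using (hε z x).symm.trans (hz x)
    · simp only [dotProduct_structMul, hv, dotProductBilin_apply_apply, Matrix.add_mulVec,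
        Matrix.vecMulVec_mulVec, dotProduct_comm x]
      simp [mul_comm]
  exact dotProduct_eq _ _ fun x => by simpa using LinearMap.congr_fun hp0 x

end IsFrobeniusOn

/-! ### The Levi-Civita derivative of the identity -/

/-- The matrix of the endomorphism `Y ↦ ∇^g_Y X` of the tangent spaces. -/
def covJacobian (g : Met n) (X : VF n) (t : Pt n) : Matrix (Fin n) (Fin n) ℝ :=
  .of fun k i => jacobian X t k i + ∑ m, chr g k i m t * X t m

theorem covV_eq_mulVec (g : Met n) (Y X : VF n) (t : Pt n) :
    covV g Y X t = covJacobian g X t *ᵥ Y t :=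
  funext fun _ => Finset.sum_congr rfl fun _ _ => mul_comm _ _

theorem covV_congr (g : Met n) (Y : VF n) {X Z : VF n} {t : Pt n} (hXZ : X =ᶠ[𝓝 t] Z) :
    covV g Y X t = covV g Y Z t := by
  rw [covV_eq_mulVec, covV_eq_mulVec, covJacobian, covJacobian, jacobian_congr hXZ,
    hXZ.eq_of_nhds]

theorem mulVec_chr {g : Met n} {t : Pt n} (hg : IsUnit (g t)) (i m : Fin n) :
    g t *ᵥ (fun k => chr g k i m t) = fun j => 1 / 2 * (pder i (fun s => g s m j) t
      + pder m (fun s => g s i j) t - pder j (fun s => g s i m) t) := by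
  set firstKind : Fin n → ℝ := fun j => 1 / 2 * (pder i (fun s => g s m j) t
    + pder m (fun s => g s i j) t - pder j (fun s => g s i m) t) with hfirst
  have hchr : (fun k => chr g k i m t) = (g t)⁻¹ *ᵥ firstKind := by
    ext k
    simp only [chr, Matrix.mulVec, dotProduct, hfirst, Finset.mul_sum, mul_left_comm]
  rw [hchr, Matrix.mulVec_mulVec, Matrix.mul_nonsing_inv _ ((Matrix.isUnit_iff_isUnit_det _).1 hg),
    Matrix.one_mulVec]

theorem metric_mul_covJacobian_apply {g : Met n} (X : VF n) {t : Pt n} (hg : IsUnit (g t))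
    (j i : Fin n) :
    (g t * covJacobian g X t) j i = (g t * jacobian X t) j i
      + ∑ m, 1 / 2 * (pder i (fun s => g s m j) t + pder m (fun s => g s i j) t
        - pder j (fun s => g s i m) t) * X t m := by
  simp only [← congrFun (mulVec_chr hg _ _) j, covJacobian, Matrix.mul_apply, Matrix.of_apply,
    Matrix.mulVec, dotProduct, mul_add, Finset.sum_add_distrib, Finset.mul_sum, Finset.sum_mul]
  rw [Finset.sum_comm (γ := Fin n)]
  simp only [mul_assoc]

theorem lieMet_eq_covJacobian {g : Met n} (X : VF n) {t : Pt n} (hg : IsUnit (g t))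
    (hsymm : ∀ᶠ s in 𝓝 t, (g s).IsSymm) :
    lieMet X g t = (g t * covJacobian g X t)ᵀ + g t * covJacobian g X t := by
  have hpder (a b d) : pder a (fun s => g s b d) t = pder a (fun s => g s d b) t := by
    rw [pder_eq_lieFun, pder_eq_lieFun]
    exact lieFun_congr _ (hsymm.mono fun s hs => hs.apply d b)
  have hJ : (jacobian X t)ᵀ * g t = (g t * jacobian X t)ᵀ := by
    rw [Matrix.transpose_mul, hsymm.self_of_nhds.eq]
  ext i j
  rw [lieMet_eq, hJ]
  simp only [Matrix.add_apply, Matrix.transpose_apply, metric_mul_covJacobian_apply X hg,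
    lieEntries, Matrix.of_apply, lieFun]
  have hsum : ∑ m, X t m * pder m (fun s => g s i j) t
      = ∑ m, 1 / 2 * (pder i (fun s => g s m j) t + pder m (fun s => g s i j) t
          - pder j (fun s => g s i m) t) * X t m
        + ∑ m, 1 / 2 * (pder j (fun s => g s m i) t + pder m (fun s => g s j i) t
          - pder i (fun s => g s j m) t) * X t m := by
    rw [← Finset.sum_add_distrib]
    refine Finset.sum_congr rfl fun m _ => ?_
    rw [hpder m j i, hpder i j m, hpder j i m]
    ring
  rw [hsum]
  ring

theorem mdown2_eq (g : Met n) (X Y : VF n) (t : Pt n) :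
    mdown2 g X Y t = X t ᵥ* g t ⬝ᵥ Y t := by
  rw [← Matrix.dotProduct_mulVec]
  simp only [mdown2, dotProduct, Matrix.mulVec, Finset.mul_sum]
  exact Finset.sum_congr rfl fun i _ => Finset.sum_congr rfl fun j _ => by ring

theorem eq_of_mdown2_eq {g : Met n} {X Y : VF n} {t : Pt n} (hg : IsUnit (g t))
    (h : ∀ z : Fin n → ℝ, mdown2 g X (fun _ => z) t = mdown2 g Y (fun _ => z) t) :
    X t = Y t :=
  Matrix.vecMul_injective_of_isUnit hg (dotProduct_eq _ _ fun z => by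
    simpa only [mdown2_eq] using h z)

theorem IsFrobeniusOn.covMul_one {U : Set (Pt n)} {c : Mul2 n} {g : Met n} {e : VF n}
    (hF : IsFrobeniusOn U c g e) (hU : IsOpen U) {t : Pt n} (ht : t ∈ U) (X Y : VF n) :
    covMul g c X Y e t = -structMul (c t) (Y t) (covV g X e t) := by
  have hYe : mapp c Y e =ᶠ[𝓝 t] Y :=
    Filter.eventuallyEq_of_mem (hU.mem_nhds ht) fun s hs => hF.structMul_one hs (Y s)
  have h : covMul g c X Y e t = covV g X (mapp c Y e) t
      - structMul (c t) (covV g X Y t) (e t) - structMul (c t) (Y t) (covV g X e t) := rfl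
  rw [h, covV_congr g X hYe, hF.structMul_one ht, sub_self, zero_sub]

theorem IsFrobeniusOn.lieMet_one_mem_range {U : Set (Pt n)} {c : Mul2 n} {g : Met n} {e : VF n}
    (hF : IsFrobeniusOn U c g e) (hU : IsOpen U) {t : Pt n} (ht : t ∈ U) {w : Fin n → ℝ}
    (hw : ∀ x, covV g (fun _ => x) e t = structMul (c t) x w) :
    lieMet e g t ∈ LinearMap.range (contract (c t)) := by
  have hsymm : ∀ᶠ s in 𝓝 t, (g s).IsSymm :=
    Filter.eventually_of_mem (hU.mem_nhds ht) fun s hs => (hF.met.2 s hs).1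
  have hcov : g t * covJacobian g e t = contract (c t) (g t *ᵥ w) := by
    refine eq_contract_of_dotProduct_eq fun x y => ?_
    rw [← Matrix.mulVec_mulVec, ← covV_eq_mulVec g (fun _ => y), hw,
      ← structMul_dotProduct_mulVec (hF.invar t ht), dotProduct_comm]
  have hcomm : (contract (c t) (g t *ᵥ w))ᵀ = contract (c t) (g t *ᵥ w) := by
    ext i j
    simp only [Matrix.transpose_apply, contract_apply, hF.comm t ht _ j i]
  rw [lieMet_eq_covJacobian e (hF.met.2 t ht).2 hsymm, hcov, hcomm, ← map_add]
  exact LinearMap.mem_range_self _ _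

namespace IsWeakF

variable {U : Set (Pt n)} {c : Mul2 n} {g' : Met n} {E e Einv : VF n} {Dt k : Pt n → ℝ}
  {t : Pt n}

theorem isFrobeniusOn (hW : IsWeakF U c g' E e Einv Dt k) : IsFrobeniusOn U c g' e where
  met := hW.met
  smooth_c := hW.smooth_c
  smooth_e := hW.smooth_e
  comm := hW.comm
  assoc := hW.assoc
  unit := hW.unit
  invar := hW.invar

theorem structMul_E_covV_one (hW : IsWeakF U c g' E e Einv Dt k) (hU : IsOpen U) (ht : t ∈ U)
    (x : Fin n → ℝ) :
    structMul (c t) (E t) (covV g' (fun _ => x) e t) = structMul (c t) x (covV g' E e t) := by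
  have smooth_const (y : Fin n → ℝ) : SmoothVF U fun _ => y := fun _ => contDiffOn_const
  have hsymm : covMul g' c E (fun _ => x) e t = covMul g' c (fun _ => x) E e t :=
    eq_of_mdown2_eq (hW.met.2 t ht).2 fun z =>
      hW.sym_E _ e _ (smooth_const x) hW.smooth_e (smooth_const z) t ht
  rw [hW.isFrobeniusOn.covMul_one hU ht, hW.isFrobeniusOn.covMul_one hU ht, neg_inj] at hsymm
  exact hsymm.symm

theorem covV_one_eq (hW : IsWeakF U c g' E e Einv Dt k) (hU : IsOpen U) (ht : t ∈ U)
    (x : Fin n → ℝ) :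
    covV g' (fun _ => x) e t = structMul (c t) x (structMul (c t) (Einv t) (covV g' E e t)) := by
  have hF := hW.isFrobeniusOn
  have hinv : structMul (c t) (Einv t) (E t) = e t := by
    rw [hF.structMul_comm ht]
    exact funext (hW.e_inv t ht)
  calc covV g' (fun _ => x) e t
      = structMul (c t) (Einv t) (structMul (c t) (E t) (covV g' (fun _ => x) e t)) := by
        rw [← hF.structMul_assoc ht, hinv, hF.one_structMul ht]
    _ = structMul (c t) (Einv t) (structMul (c t) x (covV g' E e t)) := by
        rw [hW.structMul_E_covV_one hU ht]
    _ = structMul (c t) x (structMul (c t) (Einv t) (covV g' E e t)) := by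
        rw [← hF.structMul_assoc ht, hF.structMul_comm ht (Einv t), hF.structMul_assoc ht]

theorem lieMet_one_mem_range (hW : IsWeakF U c g' E e Einv Dt k) (hU : IsOpen U) (ht : t ∈ U) :
    lieMet e g' t ∈ LinearMap.range (contract (c t)) :=
  hW.isFrobeniusOn.lieMet_one_mem_range hU ht (hW.covV_one_eq hU ht)

end IsWeakF

theorem stmt1_general (hn : 3 ≤ n) {U : Set (Pt n)} (hUopen : IsOpen U)
    (hUconn : IsPreconnected U) {c : Mul2 n} {g : Met n} {E e : VF n} {D k : Pt n → ℝ}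
    (hF : IsFrobeniusOn U c g e) (hE : SmoothVF U E) (hD : DifferentiableOn ℝ D U)
    (hk : DifferentiableOn ℝ k U) (lie_g : ∀ t ∈ U, lieMet E g t = D t • g t)
    (lie_c : ∀ t ∈ U, lieMul E c t = k t • c t)
    (lie_e : ∀ t ∈ U, lieMet e g t ∈ LinearMap.range (contract (c t))) :
    ∃ c₀ : ℝ, ∀ t ∈ U, k t = c₀ := by
  refine hUopen.exists_is_const_of_fderiv_eq_zero hUconn hk fun t ht => ?_
  have hdk : differential k t = 0 := hF.eq_zero_of_vecMulVec_mem_range hn ht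
    (hF.vecMulVec_differential_mem_range hUopen hE hD hk lie_g lie_c lie_e ht)
  exact ContinuousLinearMap.coe_injective
    (LinearMap.pi_ext' fun i => LinearMap.ext_ring (congrFun hdk i))

/-- On a connected weak F-manifold of dimension at least three, the Euler
vector field rescales the multiplication • by a constant. -/
theorem stmt1 {n : ℕ} (hn : 3 ≤ n) (U : Set (Pt n)) (hUopen : IsOpen U)
    (hUconn : IsConnected U)
    (c : Mul2 n) (g' : Met n) (E e Einv : VF n) (Dt k : Pt n → ℝ)
    (hW : IsWeakF U c g' E e Einv Dt k) :
    ∃ c₀ : ℝ, ∀ t ∈ U, k t = c₀ :=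
  stmt1_general hn hUopen hUconn.isPreconnected hW.isFrobeniusOn hW.smooth_E
    (hW.smooth_Dt.differentiableOn (by simp)) (hW.smooth_k.differentiableOn (by simp))
    (fun t ht => Matrix.ext (hW.lie_g t ht))
    (fun t ht => funext fun a => funext fun i => funext (hW.lie_c t ht a i))
    fun _ ht => hW.lieMet_one_mem_range hUopen ht
end
end

section
/- Let (U, •, h̃, E) be a weak F-manifold, where U is a nonempty connected open subset of ℝ^n with n ≥ 3. Define the metric h on U by requiring h*(h̃(X)) = E•X for every vector field X (assume the resulting matrix h⁻¹ is symmetric and invertible at every point, so that h is a metric). Then (h, h̃) together with the Euler vector field E is a weak quasi-homogeneous pencil; in particular (h, h̃) is a compatible pair of metrics. -/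
open scoped BigOperators

noncomputable section

variable {n : ℕ}

/-!
Let `A` be the multiplication by `E`, so that `h A = h̃`, let `L_x` be the multiplication by `x` and
let `T = ∇E - (D̃ - k)/2`. The two scaling conditions on `E` and the symmetry condition on `∇(•)`
together say that `∇_x A = [T, L_x] + k L_x`, and that `T` is an infinitesimal conformal
transformation of `h̃`. Hence the Levi-Civita connection of `h` is that of `h̃` minus `T A⁻¹ L_x`.
The equation for `A` is not affected by replacing `A` by `A + λ`, which replaces `h` by the member
`h_λ` of the pencil, while `Γ_λ A_λ` and `R_λ A_λ` are affine in `λ`: this is compatibility. It also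
gives `∇ʰE = (D̃ - k)/2`.

It remains to see that `k` is constant. The field `E` is conformal for both metrics, with factors
`D̃` and `D̃ - k`, so that the Lie derivatives along `E` of the two connections are the conformal
variations given by the differentials of these factors. On the other hand they differ by
`x ↦ N L_x` for some endomorphism `N`. Applying this to `y • z` and exchanging `x` and `y` yields
`dk(x) y•z + dk(y•z) x = dk(y) x•z + dk(x•z) y`. Contracting `y` and `z` produces the Casimir
element of `•`, and the traces of the result force `dk = 0` as soon as `n ≥ 3`.
-/

namespace WeakFManifold

open Matrix
open scoped ContDiff

section LinearAlgebra

variable {ι K : Type*} [Fintype ι] [Field K] {G H : Matrix ι ι K}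

theorem dotProduct_mulVec_comm (hG : G.IsSymm) (x y : ι → K) : x ⬝ᵥ G *ᵥ y = y ⬝ᵥ G *ᵥ x := by
  rw [dotProduct_mulVec, ← mulVec_transpose, hG.eq, dotProduct_comm]

theorem dotProduct_mulVec_of_isSelfAdjoint {A : Matrix ι ι K} (hA : G.IsSelfAdjoint A)
    (x y : ι → K) : x ⬝ᵥ G *ᵥ (A *ᵥ y) = (A *ᵥ x) ⬝ᵥ G *ᵥ y := by
  rw [mulVec_mulVec, ← hA, ← mulVec_mulVec, dotProduct_mulVec, vecMul_transpose]

/-- `L` is the left multiplication of a commutative associative product which is invariant with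
respect to the bilinear form with matrix `G`. -/
structure IsInvariantProduct (G : Matrix ι ι K) (L : (ι → K) →ₗ[K] Matrix ι ι K) : Prop where
  mulVec_comm : ∀ x y, L x *ᵥ y = L y *ᵥ x
  commute : ∀ x y, Commute (L x) (L y)
  isSelfAdjoint : ∀ x, G.IsSelfAdjoint (L x)

variable {L : (ι → K) →ₗ[K] Matrix ι ι K} {u w : ι → K}

theorem IsInvariantProduct.dotProduct_mulVec_mul_comm (hL : IsInvariantProduct G L)
    (x y z : ι → K) : (L y *ᵥ z) ⬝ᵥ G *ᵥ x = (L x *ᵥ z) ⬝ᵥ G *ᵥ y := by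
  rw [← dotProduct_mulVec_of_isSelfAdjoint (hL.isSelfAdjoint y), hL.mulVec_comm,
    dotProduct_mulVec_of_isSelfAdjoint (hL.isSelfAdjoint x)]

variable [DecidableEq ι]

theorem inv_mul_of_mul_eq {A : Matrix ι ι K} (hG : IsUnit G) (h : H * A = G) : A⁻¹ * A = 1 :=
  nonsing_inv_mul _ ((isUnit_iff_isUnit_det _).1 (isUnit_of_mul_isUnit_right (h.symm ▸ hG)))

theorem eq_of_torsionFree_of_symmetrization_eq [CharZero K] (hG : G.IsSymm) (hGu : IsUnit G)
    {S T : (ι → K) → Matrix ι ι K} (hS : ∀ x y, S x *ᵥ y = S y *ᵥ x)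
    (hT : ∀ x y, T x *ᵥ y = T y *ᵥ x)
    (h : ∀ x, (S x)ᵀ * G + G * S x = (T x)ᵀ * G + G * T x) : S = T := by
  set b : (ι → K) → (ι → K) → (ι → K) → K :=
    fun x y z => z ⬝ᵥ G *ᵥ (S x *ᵥ y) - z ⬝ᵥ G *ᵥ (T x *ᵥ y) with hb
  have symm : ∀ x y z, b x y z = b y x z := fun x y z => by simp only [hb, hS x y, hT x y]
  have skew : ∀ x y z, b x y z = -b x z y := fun x y z => by
    have hx := congrArg (fun N => z ⬝ᵥ N *ᵥ y) (h x)
    simp only [add_mulVec, dotProduct_add, ← mulVec_mulVec, dotProduct_mulVec _ _ᵀ,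
      vecMul_transpose] at hx
    rw [dotProduct_mulVec_comm hG, dotProduct_mulVec_comm hG (T x *ᵥ z)] at hx
    linear_combination hx
  have zero : ∀ x y z, b x y z = 0 := fun x y z => by
    linear_combination (1 / 2 : K) * (symm x y z + skew y x z - symm y z x - skew z y x
      + symm z x y + skew x z y)
  refine funext fun x => ext_iff_mulVec.2 fun y => mulVec_injective_iff_isUnit.2 hGu ?_
  exact dotProduct_eq _ _ fun z => by
    rw [dotProduct_comm, dotProduct_comm _ z]; exact sub_eq_zero.1 (zero x y z)

/-- The variation of the Levi-Civita connection of a metric `G` under an infinitesimal conformal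
change `u` (the differential of the conformal factor), in the direction `x`. -/
def conformalVariation (G : Matrix ι ι K) (u x : ι → K) : Matrix ι ι K :=
  (1 / 2 : K) • ((x ⬝ᵥ u) • 1 + vecMulVec x u - vecMulVec (G⁻¹ *ᵥ u) (G *ᵥ x))

theorem conformalVariation_mulVec (G : Matrix ι ι K) (u x y : ι → K) :
    conformalVariation G u x *ᵥ y
      = (1 / 2 : K) • ((x ⬝ᵥ u) • y + (u ⬝ᵥ y) • x - (y ⬝ᵥ G *ᵥ x) • G⁻¹ *ᵥ u) := by
  simp only [conformalVariation, smul_mulVec, sub_mulVec, add_mulVec, one_mulVec,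
    vecMulVec_mulVec, op_smul_eq_smul, dotProduct_comm y]

theorem conformalVariation_mulVec_comm (hG : G.IsSymm) (u x y : ι → K) :
    conformalVariation G u x *ᵥ y = conformalVariation G u y *ᵥ x := by
  rw [conformalVariation_mulVec, conformalVariation_mulVec, dotProduct_mulVec_comm hG y,
    dotProduct_comm u, dotProduct_comm u]
  module

theorem conformalVariation_symmetrization [CharZero K] (hG : G.IsSymm) (hGu : IsUnit G)
    (u x : ι → K) :
    (conformalVariation G u x)ᵀ * G + G * conformalVariation G u x = (x ⬝ᵥ u) • G := by
  have hGd := (isUnit_iff_isUnit_det G).1 hGu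
  have hGu : G *ᵥ (G⁻¹ *ᵥ u) = u := by rw [mulVec_mulVec, mul_nonsing_inv _ hGd, one_mulVec]
  simp only [conformalVariation, transpose_smul, transpose_sub, transpose_add, transpose_one,
    transpose_vecMulVec, smul_mul_assoc, mul_smul_comm, Matrix.sub_mul, Matrix.add_mul,
    Matrix.mul_sub, Matrix.mul_add, Matrix.one_mul, Matrix.mul_one, vecMulVec_mul, mul_vecMulVec,
    ← mulVec_transpose, hG.eq, hGu]
  module

namespace IsInvariantProduct

theorem exchange [CharZero K] (hG : IsInvariantProduct G L) (hH : IsInvariantProduct H L)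
    {N : Matrix ι ι K}
    (h : ∀ x, conformalVariation H w x = conformalVariation G u x + N * L x) (x y z : ι → K) :
    (x ⬝ᵥ (w - u)) • L y *ᵥ z + ((w - u) ⬝ᵥ L y *ᵥ z) • x
      = (y ⬝ᵥ (w - u)) • L x *ᵥ z + ((w - u) ⬝ᵥ L x *ᵥ z) • y := by
  have hxy : ∀ x y, conformalVariation H w x *ᵥ L y *ᵥ z
      = conformalVariation G u x *ᵥ L y *ᵥ z + N *ᵥ (L x * L y) *ᵥ z := fun x y => by
    rw [h, add_mulVec, mulVec_mulVec z, mulVec_mulVec, mulVec_mulVec, Matrix.mul_assoc]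
  have hx := hxy x y
  have hy := hxy y x
  rw [(hG.commute y x).eq] at hy
  simp only [conformalVariation_mulVec, hG.dotProduct_mulVec_mul_comm x y,
    hH.dotProduct_mulVec_mul_comm x y] at hx hy
  simp only [dotProduct_sub, sub_dotProduct]
  linear_combination (norm := module) (2 : K) • (hx - hy)

/-- The Casimir element `∑ eᵢ • eⁱ` of the product, for `G`-dual bases `eᵢ` and `eⁱ`. -/
def casimir (G : Matrix ι ι K) (L : (ι → K) →ₗ[K] Matrix ι ι K) : ι → K :=
  ∑ i, L (Pi.single i 1) *ᵥ G⁻¹ *ᵥ Pi.single i 1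

theorem mulVec_casimir (hGu : IsUnit G) (hL : IsInvariantProduct G L)
    (x : ι → K) : (G *ᵥ casimir G L) ⬝ᵥ x = (L x).trace := by
  have hGd := (isUnit_iff_isUnit_det G).1 hGu
  calc (G *ᵥ casimir G L) ⬝ᵥ x
      = ∑ i, (L x *ᵥ Pi.single i 1) ⬝ᵥ G *ᵥ (G⁻¹ *ᵥ Pi.single i 1) := by
        rw [dotProduct_comm, casimir, mulVec_sum, dotProduct_sum]
        refine Finset.sum_congr rfl fun i _ => ?_
        rw [dotProduct_mulVec_of_isSelfAdjoint (hL.isSelfAdjoint _), hL.mulVec_comm]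
    _ = (L x).trace := by
        rw [trace]
        refine Finset.sum_congr rfl fun i _ => ?_
        rw [mulVec_mulVec, mul_nonsing_inv _ hGd, one_mulVec, dotProduct_single_one,
          mulVec_single_one, col_apply, diag_apply]

theorem vecMulVec_casimir_add (hGs : G.IsSymm) (hGu : IsUnit G) (hL : IsInvariantProduct G L)
    {v : ι → K} (h : ∀ x y z, (x ⬝ᵥ v) • L y *ᵥ z + (v ⬝ᵥ L y *ᵥ z) • x
      = (y ⬝ᵥ v) • L x *ᵥ z + (v ⬝ᵥ L x *ᵥ z) • y) :
    vecMulVec (casimir G L) v + (v ⬝ᵥ casimir G L) • 1 = (2 : K) • L (G⁻¹ *ᵥ v) := by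
  have hLG : ∀ x, (L x * G⁻¹)ᵀ = L x * G⁻¹ := fun x => by
    rw [transpose_mul, hGs.inv.eq, ← hGu.unit_spec, ← coe_units_inv, Units.inv_mul_eq_iff_eq_mul,
      ← Matrix.mul_assoc, Units.eq_mul_inv_iff_mul_eq, hGu.unit_spec, hL.isSelfAdjoint x]
  refine ext_iff_mulVec.2 fun x => ?_
  calc (vecMulVec (casimir G L) v + (v ⬝ᵥ casimir G L) • 1) *ᵥ x
      = (x ⬝ᵥ v) • casimir G L + (v ⬝ᵥ casimir G L) • x := by
        rw [add_mulVec, vecMulVec_mulVec, op_smul_eq_smul, smul_mulVec, one_mulVec,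
          dotProduct_comm x]
    _ = ∑ i, ((Pi.single i 1 ⬝ᵥ v) • L x *ᵥ (G⁻¹ *ᵥ Pi.single i 1)
          + (v ⬝ᵥ L x *ᵥ (G⁻¹ *ᵥ Pi.single i 1)) • Pi.single i (1 : K)) := by
        rw [casimir, Finset.smul_sum, dotProduct_sum, Finset.sum_smul, ← Finset.sum_add_distrib]
        exact Finset.sum_congr rfl fun i _ => h x _ _
    _ = L x *ᵥ (G⁻¹ *ᵥ v) + (L x * G⁻¹)ᵀ *ᵥ v := by
        simp only [Finset.sum_add_distrib, single_one_dotProduct, ← mulVec_smul, ← mulVec_sum,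
          mulVec_mulVec (Pi.single _ _), dotProduct_mulVec, dotProduct_single_one, mulVec_transpose]
        rw [← pi_eq_sum_univ', ← pi_eq_sum_univ', ← mulVec_mulVec]
    _ = ((2 : K) • L (G⁻¹ *ᵥ v)) *ᵥ x := by
        rw [hLG, ← mulVec_mulVec, smul_mulVec, hL.mulVec_comm _ x, two_smul]

theorem eq_zero_of_exchange [CharZero K] (hcard : 3 ≤ Fintype.card ι) (hGs : G.IsSymm)
    (hGu : IsUnit G) (hL : IsInvariantProduct G L) {e : ι → K} (he : L e = 1) {v : ι → K}
    (h : ∀ x y z, (x ⬝ᵥ v) • L y *ᵥ z + (v ⬝ᵥ L y *ᵥ z) • x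
      = (y ⬝ᵥ v) • L x *ᵥ z + (v ⬝ᵥ L x *ᵥ z) • y) : v = 0 := by
  have hGv : G *ᵥ G⁻¹ *ᵥ v = v := by
    rw [mulVec_mulVec, mul_nonsing_inv _ ((isUnit_iff_isUnit_det G).1 hGu), one_mulVec]
  have hv := hL.vecMulVec_casimir_add hGs hGu h
  have hvδ : v ⬝ᵥ casimir G L = 0 := by
    have hcard₁ : (Fintype.card ι : K) - 1 ≠ 0 := sub_ne_zero.2 (by norm_cast; omega)
    have htr := congrArg trace hv
    rw [trace_add, trace_vecMulVec, trace_smul, trace_one, trace_smul,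
      ← hL.mulVec_casimir hGu, dotProduct_comm _ (G⁻¹ *ᵥ v), dotProduct_mulVec_comm hGs, hGv,
      dotProduct_comm _ v, smul_eq_mul, smul_eq_mul] at htr
    refine (mul_eq_zero.1 ?_).resolve_left hcard₁
    linear_combination htr
  have hve : (v ⬝ᵥ e) • casimir G L = (2 : K) • G⁻¹ *ᵥ v := by
    have hve := congrArg (· *ᵥ e) hv
    simpa only [hvδ, zero_smul, add_zero, vecMulVec_mulVec, op_smul_eq_smul, smul_mulVec,
      hL.mulVec_comm _ e, he, one_mulVec] using hve
  have hve₀ : v ⬝ᵥ e = 0 := by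
    have hcard₂ : (Fintype.card ι : K) - 2 ≠ 0 := sub_ne_zero.2 (by norm_cast; omega)
    have hGe := congrArg (fun x => (G *ᵥ x) ⬝ᵥ e) hve
    simp only [mulVec_smul, smul_dotProduct, hL.mulVec_casimir hGu, he, trace_one, hGv,
      smul_eq_mul] at hGe
    refine (mul_eq_zero.1 ?_).resolve_left hcard₂
    linear_combination hGe
  rw [hve₀, zero_smul, eq_comm, smul_eq_zero_iff_right two_ne_zero] at hve
  rw [← hGv, hve, mulVec_zero]

theorem eq_of_conformalVariation_eq [CharZero K] (hcard : 3 ≤ Fintype.card ι) (hGs : G.IsSymm)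
    (hGu : IsUnit G) (hG : IsInvariantProduct G L) (hH : IsInvariantProduct H L) {e : ι → K}
    (he : L e = 1) {N : Matrix ι ι K}
    (h : ∀ x, conformalVariation H w x = conformalVariation G u x + N * L x) : w = u :=
  sub_eq_zero.1 (hG.eq_zero_of_exchange hcard hGs hGu he (hG.exchange hH h))

end IsInvariantProduct

end LinearAlgebra

attribute [local instance] Matrix.linftyOpNormedRing Matrix.linftyOpNormedAlgebra

section Calculus

variable {U : Set (Pt n)} {t : Pt n}

theorem differentiableAt_of_contDiffOn {F : Type*} [NormedAddCommGroup F] [NormedSpace ℝ F]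
    {f : Pt n → F} (hU : IsOpen U) (hf : ContDiffOn ℝ ∞ f U) (ht : t ∈ U) :
    DifferentiableAt ℝ f t :=
  (hf.contDiffAt (hU.mem_nhds ht)).differentiableAt (by simp)

theorem fderiv_congr_of_eqOn {F : Type*} [NormedAddCommGroup F] [NormedSpace ℝ F]
    {f f' : Pt n → F} (hU : IsOpen U) (hff' : Set.EqOn f f' U) (ht : t ∈ U) :
    fderiv ℝ f t = fderiv ℝ f' t :=
  (hff'.eventuallyEq_of_mem (hU.mem_nhds ht)).fderiv_eq

theorem fderiv_linearMap {F F' : Type*} [NormedAddCommGroup F] [NormedSpace ℝ F]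
    [FiniteDimensional ℝ F] [NormedAddCommGroup F'] [NormedSpace ℝ F'] (φ : F →ₗ[ℝ] F')
    {f : Pt n → F} (hf : DifferentiableAt ℝ f t) (v : Pt n) :
    fderiv ℝ (fun s => φ (f s)) t v = φ (fderiv ℝ f t v) :=
  congrArg (· v) ((φ.toContinuousLinearMap.hasFDerivAt.comp t hf.hasFDerivAt).fderiv)

theorem contDiffOn_linearMap {F F' : Type*} [NormedAddCommGroup F] [NormedSpace ℝ F]
    [FiniteDimensional ℝ F] [NormedAddCommGroup F'] [NormedSpace ℝ F'] (φ : F →ₗ[ℝ] F')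
    {f : Pt n → F} (hf : ContDiffOn ℝ ∞ f U) : ContDiffOn ℝ ∞ (fun s => φ (f s)) U :=
  φ.toContinuousLinearMap.contDiff.comp_contDiffOn hf

theorem smoothVF_iff {X : VF n} : SmoothVF U X ↔ ContDiffOn ℝ ∞ X U :=
  contDiffOn_pi.symm

theorem smoothMet_iff {X : Met n} : SmoothMet U X ↔ ContDiffOn ℝ ∞ X U := by
  refine ⟨fun h => ?_, fun h i j => contDiffOn_linearMap (Matrix.entryLinearMap ℝ ℝ i j) h⟩
  have hX : X = fun s => ∑ i, ∑ j, X s i j • Matrix.single i j (1 : ℝ) := funext fun s => by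
    simpa [Matrix.smul_single] using Matrix.matrix_eq_sum_single (X s)
  rw [hX]
  exact ContDiffOn.sum fun i _ => ContDiffOn.sum fun j _ => (h i j).smul contDiffOn_const

theorem pder_apply {X : VF n} (hX : DifferentiableAt ℝ X t) (i k : Fin n) :
    pder i (fun s => X s k) t = fderiv ℝ X t (Pi.single i 1) k :=
  fderiv_linearMap (LinearMap.proj k) hX _

theorem pder_apply_apply {X : Met n} (hX : DifferentiableAt ℝ X t) (i j k : Fin n) :
    pder i (fun s => X s j k) t = fderiv ℝ X t (Pi.single i 1) j k :=
  fderiv_linearMap (Matrix.entryLinearMap ℝ ℝ j k) hX _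

theorem fderiv_matrix_mul {X Y : Met n} (hX : DifferentiableAt ℝ X t)
    (hY : DifferentiableAt ℝ Y t) (v : Pt n) :
    fderiv ℝ (fun s => X s * Y s) t v = fderiv ℝ X t v * Y t + X t * fderiv ℝ Y t v :=
  (congrArg (· v) (fderiv_fun_mul' hX hY)).trans (add_comm _ _)

theorem differentiableAt_mulVec_const {X : Met n} (hX : DifferentiableAt ℝ X t) (z : Pt n) :
    DifferentiableAt ℝ (fun s => X s *ᵥ z) t :=
  ((Matrix.mulVecBilin ℝ ℝ).flip z).toContinuousLinearMap.differentiableAt.fun_comp' t hX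

theorem fderiv_mulVec_const {X : Met n} (hX : DifferentiableAt ℝ X t) (z v : Pt n) :
    fderiv ℝ (fun s => X s *ᵥ z) t v = fderiv ℝ X t v *ᵥ z :=
  fderiv_linearMap ((Matrix.mulVecBilin ℝ ℝ).flip z) hX v

theorem fderiv_transpose {X : Met n} (hX : DifferentiableAt ℝ X t) (v : Pt n) :
    fderiv ℝ (fun s => (X s)ᵀ) t v = (fderiv ℝ X t v)ᵀ :=
  fderiv_linearMap (Matrix.transposeLinearEquiv (Fin n) (Fin n) ℝ ℝ).toLinearMap hX v

theorem differentiableAt_transpose {X : Met n} (hX : DifferentiableAt ℝ X t) :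
    DifferentiableAt ℝ (fun s => (X s)ᵀ) t :=
  (Matrix.transposeLinearEquiv (Fin n) (Fin n) ℝ
    ℝ).toLinearMap.toContinuousLinearMap.differentiableAt.fun_comp' t hX

theorem fderiv_symmetrization {X g : Met n} (hX : DifferentiableAt ℝ X t)
    (hg : DifferentiableAt ℝ g t) (v : Pt n) :
    fderiv ℝ (fun s => (X s)ᵀ * g s + g s * X s) t v
      = (fderiv ℝ X t v)ᵀ * g t + (X t)ᵀ * fderiv ℝ g t v
        + (fderiv ℝ g t v * X t + g t * fderiv ℝ X t v) := by
  have hXt := differentiableAt_transpose hX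
  rw [← fderiv_transpose hX, ← fderiv_matrix_mul hXt hg, ← fderiv_matrix_mul hg hX]
  exact congrArg (· v) (fderiv_fun_add (hXt.fun_mul hg) (hg.fun_mul hX))

theorem contDiffOn_matrix_inv {X : Met n} (hX : ContDiffOn ℝ ∞ X U)
    (hXu : ∀ s ∈ U, IsUnit (X s)) : ContDiffOn ℝ ∞ (fun s => (X s)⁻¹) U := fun s hs => by
  have : CompleteSpace (Matrix (Fin n) (Fin n) ℝ) := FiniteDimensional.complete ℝ _
  have hinv : ContDiffAt ℝ ∞ Ring.inverse (X s) := contDiffAt_ringInverse ℝ (hXu s hs).unit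
  simp only [Matrix.nonsing_inv_eq_ringInverse]
  exact hinv.comp_contDiffWithinAt s (hX s hs)

theorem contDiffOn_fderiv_apply {F : Type*} [NormedAddCommGroup F] [NormedSpace ℝ F]
    {f : Pt n → F} (hU : IsOpen U) (hf : ContDiffOn ℝ ∞ f U) {X : VF n}
    (hX : ContDiffOn ℝ ∞ X U) : ContDiffOn ℝ ∞ (fun s => fderiv ℝ f s (X s)) U :=
  (hf.fderiv_of_isOpen hU (by simp)).clm_apply hX

theorem fderiv_fderiv_comm {F : Type*} [NormedAddCommGroup F] [NormedSpace ℝ F]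
    {f : Pt n → F} (hU : IsOpen U) (hf : ContDiffOn ℝ ∞ f U) (ht : t ∈ U) (x y : Pt n) :
    fderiv ℝ (fun s => fderiv ℝ f s x) t y = fderiv ℝ (fun s => fderiv ℝ f s y) t x := by
  have hf' := differentiableAt_of_contDiffOn hU (hf.fderiv_of_isOpen hU (m := ∞) (by simp)) ht
  have hsymm : IsSymmSndFDerivAt ℝ f t :=
    (hf.contDiffAt (hU.mem_nhds ht)).isSymmSndFDerivAt
      (by simpa using WithTop.coe_le_coe.2 (le_top : (2 : ℕ∞) ≤ ⊤))
  rw [fderiv_clm_apply hf' (differentiableAt_const x),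
    fderiv_clm_apply hf' (differentiableAt_const y)]
  simpa using hsymm y x

theorem map_eq_sum_smul_single {F Φ : Type*} [AddCommMonoid F] [Module ℝ F] [FunLike Φ (Pt n) F]
    [LinearMapClass Φ ℝ (Pt n) F] (φ : Φ) (x : Pt n) : φ x = ∑ i, x i • φ (Pi.single i 1) := by
  conv_lhs => rw [pi_eq_sum_univ' x]
  simp only [map_sum, map_smul]

section LinearFamily

variable {X : VF n}

theorem contDiffOn_family_apply {L : Pt n → Pt n →ₗ[ℝ] Matrix (Fin n) (Fin n) ℝ}
    (hL : ∀ x, ContDiffOn ℝ ∞ (fun s => L s x) U) (hX : ContDiffOn ℝ ∞ X U) :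
    ContDiffOn ℝ ∞ (fun s => L s (X s)) U := by
  rw [funext fun s => map_eq_sum_smul_single (L s) (X s)]
  exact ContDiffOn.sum fun i _ => (contDiffOn_pi.1 hX i).smul (hL _)

theorem fderiv_family_const {F : Type*} [NormedAddCommGroup F] [NormedSpace ℝ F]
    {L : Pt n → Pt n →ₗ[ℝ] F} (hL : ∀ x, DifferentiableAt ℝ (fun s => L s x) t) (x v : Pt n) :
    fderiv ℝ (fun s => L s x) t v = ∑ i, x i • fderiv ℝ (fun s => L s (Pi.single i 1)) t v := by
  rw [funext fun s => map_eq_sum_smul_single (L s) x,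
    fderiv_fun_sum fun i _ => (hL (Pi.single i 1)).fun_const_smul (x i)]
  simp only [fderiv_fun_const_smul (hL _), _root_.sum_apply, _root_.smul_apply]

theorem fderiv_family_apply {F : Type*} [NormedAddCommGroup F] [NormedSpace ℝ F]
    {L : Pt n → Pt n →ₗ[ℝ] F} (hU : IsOpen U) (hL : ∀ x, ContDiffOn ℝ ∞ (fun s => L s x) U)
    (hX : ContDiffOn ℝ ∞ X U) (ht : t ∈ U) (v : Pt n) :
    fderiv ℝ (fun s => L s (X s)) t v
      = fderiv ℝ (fun s => L s (X t)) t v + L t (fderiv ℝ X t v) := by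
  have hLt := fun x => differentiableAt_of_contDiffOn hU (hL x) ht
  have hXt := differentiableAt_of_contDiffOn hU hX ht
  have hXi := fun i => differentiableAt_of_contDiffOn hU (contDiffOn_pi.1 hX i) ht
  rw [funext fun s => map_eq_sum_smul_single (L s) (X s), fderiv_family_const hLt,
    map_eq_sum_smul_single (L t) (fderiv ℝ X t v),
    fderiv_fun_sum fun i _ => (hXi i).fun_smul (hLt (Pi.single i 1))]
  simp only [fderiv_fun_smul (hXi _) (hLt _), _root_.sum_apply, _root_.add_apply, _root_.smul_apply,
    ContinuousLinearMap.smulRight_apply, Finset.sum_add_distrib, fderiv_apply hXt,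
    ContinuousLinearMap.comp_apply, ContinuousLinearMap.proj_apply]

theorem fderiv_fderiv_apply {F : Type*} [NormedAddCommGroup F] [NormedSpace ℝ F] {f : Pt n → F}
    (hU : IsOpen U) (hf : ContDiffOn ℝ ∞ f U) (hX : ContDiffOn ℝ ∞ X U) (ht : t ∈ U) (v : Pt n) :
    fderiv ℝ (fun s => fderiv ℝ f s (X s)) t v
      = fderiv ℝ (fun s => fderiv ℝ f s v) t (X t) + fderiv ℝ f t (fderiv ℝ X t v) := by
  rw [← fderiv_fderiv_comm hU hf ht]
  exact fderiv_family_apply (L := fun s => (fderiv ℝ f s : Pt n →ₗ[ℝ] F)) hU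
    (fun x => contDiffOn_fderiv_apply hU hf contDiffOn_const) hX ht v

-- Restated so that the additive structure of the matrices is the one used for `leftMul` below.
theorem fderiv_matrixFamily_apply {L : Pt n → Pt n →ₗ[ℝ] Matrix (Fin n) (Fin n) ℝ}
    (hU : IsOpen U) (hL : ∀ x, ContDiffOn ℝ ∞ (fun s => L s x) U) (hX : ContDiffOn ℝ ∞ X U)
    (ht : t ∈ U) (v : Pt n) : fderiv ℝ (fun s => L s (X s)) t v
      = fderiv ℝ (fun s => L s (X t)) t v + L t (fderiv ℝ X t v) :=
  fderiv_family_apply hU hL hX ht v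

end LinearFamily

end Calculus

/-- The left multiplication `x ↦ (y ↦ c(x, y))` of a (1,2)-tensor field at a point. -/
def leftMul (c : Mul2 n) (t : Pt n) : Pt n →ₗ[ℝ] Matrix (Fin n) (Fin n) ℝ :=
  Fintype.linearCombination ℝ fun i => Matrix.of fun k j => c t k i j

/-- The connection form `x ↦ (y ↦ Γ(x, y))` of the Levi-Civita connection of `g` at a point. -/
def conn (g : Met n) : Pt n → Pt n →ₗ[ℝ] Matrix (Fin n) (Fin n) ℝ :=
  leftMul fun t k i j => chr g k i j t

section LeviCivita

variable {U : Set (Pt n)} {t : Pt n} {c : Mul2 n} {g : Met n}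

theorem leftMul_apply_apply (c : Mul2 n) (t x : Pt n) (k j : Fin n) :
    leftMul c t x k j = ∑ i, x i * c t k i j := by
  simp [leftMul, Fintype.linearCombination_apply, Matrix.sum_apply]

theorem leftMul_single_apply (c : Mul2 n) (t : Pt n) (i k j : Fin n) :
    leftMul c t (Pi.single i 1) k j = c t k i j := by
  simp [leftMul_apply_apply, Pi.single_apply]

theorem leftMul_mulVec_apply (c : Mul2 n) (t x y : Pt n) (k : Fin n) :
    (leftMul c t x *ᵥ y) k = ∑ i, ∑ j, c t k i j * x i * y j := by
  simp only [mulVec, dotProduct, leftMul_apply_apply, Finset.sum_mul]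
  rw [Finset.sum_comm]
  exact Finset.sum_congr rfl fun i _ => Finset.sum_congr rfl fun j _ => by ring

theorem leftMul_mulVec_comm (hc : ∀ k i j, c t k i j = c t k j i) (x y : Pt n) :
    leftMul c t x *ᵥ y = leftMul c t y *ᵥ x := by
  ext k
  rw [leftMul_mulVec_apply, leftMul_mulVec_apply, Finset.sum_comm]
  refine Finset.sum_congr rfl fun i _ => Finset.sum_congr rfl fun j _ => ?_
  rw [hc]
  ring

theorem contDiffOn_leftMul (hc : SmoothMul2 U c) (x : Pt n) :
    ContDiffOn ℝ ∞ (fun s => leftMul c s x) U := smoothMet_iff.1 fun k j => by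
  simp only [leftMul_apply_apply]
  exact ContDiffOn.sum fun i _ => contDiffOn_const.mul (hc k i j)

theorem contDiffOn_conn (hU : IsOpen U) (hg : IsMetricOn U g) (x : Pt n) :
    ContDiffOn ℝ ∞ (fun s => conn g s x) U := by
  have hinv := smoothMet_iff.2
    (contDiffOn_matrix_inv (smoothMet_iff.1 hg.1) fun s hs => (hg.2 s hs).2)
  have hpder : ∀ i j k, ContDiffOn ℝ ∞ (fun s => pder i (fun r => g r j k) s) U := fun i j k =>
    contDiffOn_fderiv_apply hU (hg.1 j k) contDiffOn_const
  refine contDiffOn_leftMul (fun k i j => contDiffOn_const.mul (ContDiffOn.sum fun l _ => ?_)) x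
  exact (hinv k l).mul (((hpder _ _ _).add (hpder _ _ _)).sub (hpder _ _ _))

theorem pder_metric_comm (hU : IsOpen U) (hg : IsMetricOn U g) (ht : t ∈ U) (i j k : Fin n) :
    pder i (fun s => g s j k) t = pder i (fun s => g s k j) t :=
  congrArg (· (Pi.single i 1)) (fderiv_congr_of_eqOn hU (fun s hs => ((hg.2 s hs).1.apply k j)) ht)

theorem conn_mulVec_comm (hU : IsOpen U) (hg : IsMetricOn U g) (ht : t ∈ U) (x y : Pt n) :
    conn g t x *ᵥ y = conn g t y *ᵥ x := by
  refine leftMul_mulVec_comm (fun k i j => ?_) x y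
  refine congrArg _ (Finset.sum_congr rfl fun l _ => ?_)
  rw [pder_metric_comm hU hg ht l i j]
  ring

theorem mul_conn_single_apply (hg : IsUnit (g t)) (i j k : Fin n) :
    (g t * conn g t (Pi.single i 1)) j k = (1 / 2) * (pder i (fun s => g s k j) t
      + pder k (fun s => g s i j) t - pder j (fun s => g s i k) t) := by
  have hconn : conn g t (Pi.single i 1) = (g t)⁻¹ * Matrix.of fun l k =>
      (1 / 2) * (pder i (fun s => g s k l) t
        + pder k (fun s => g s i l) t - pder l (fun s => g s i k) t) := by
    ext j k
    simp only [conn, leftMul_apply_apply, chr, Matrix.mul_apply, Matrix.of_apply, Finset.mul_sum]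
    simp [Pi.single_apply, mul_left_comm]
  rw [hconn, ← Matrix.mul_assoc, mul_nonsing_inv _ ((isUnit_iff_isUnit_det _).1 hg), Matrix.one_mul,
    Matrix.of_apply]

theorem fderiv_metric (hU : IsOpen U) (hg : IsMetricOn U g) (ht : t ∈ U) (x : Pt n) :
    fderiv ℝ g t x = (conn g t x)ᵀ * g t + g t * conn g t x := by
  have hgt := differentiableAt_of_contDiffOn hU (smoothMet_iff.1 hg.1) ht
  have htr : ∀ x, (conn g t x)ᵀ * g t = (g t * conn g t x)ᵀ := fun x => by
    rw [transpose_mul, (hg.2 t ht).1.eq]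
  have hsingle : ∀ i, fderiv ℝ g t (Pi.single i 1)
      = (conn g t (Pi.single i 1))ᵀ * g t + g t * conn g t (Pi.single i 1) := fun i => by
    ext j k
    rw [htr, Matrix.add_apply, transpose_apply, mul_conn_single_apply (hg.2 t ht).2,
      mul_conn_single_apply (hg.2 t ht).2, ← pder_apply_apply hgt, pder_metric_comm hU hg ht i j k]
    ring
  rw [map_eq_sum_smul_single (fderiv ℝ g t), map_eq_sum_smul_single (conn g t)]
  simp [hsingle, Matrix.sum_mul, Matrix.mul_sum, Finset.sum_add_distrib, transpose_sum]

theorem eq_conn (hU : IsOpen U) (hg : IsMetricOn U g) (ht : t ∈ U)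
    {S : Pt n → Matrix (Fin n) (Fin n) ℝ} (hS : ∀ x y, S x *ᵥ y = S y *ᵥ x)
    (hSg : ∀ x, (S x)ᵀ * g t + g t * S x = fderiv ℝ g t x) : S = conn g t :=
  eq_of_torsionFree_of_symmetrization_eq (hg.2 t ht).1 (hg.2 t ht).2 hS (conn_mulVec_comm hU hg ht)
    fun x => (hSg x).trans (fderiv_metric hU hg ht x)

theorem covV_eq {X Y : VF n} (hY : DifferentiableAt ℝ Y t) :
    covV g X Y t = fderiv ℝ Y t (X t) + conn g t (X t) *ᵥ Y t := by
  ext k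
  rw [Pi.add_apply, conn, leftMul_mulVec_apply, map_eq_sum_smul_single (fderiv ℝ Y t),
    Finset.sum_apply, ← Finset.sum_add_distrib]
  refine Finset.sum_congr rfl fun i _ => ?_
  rw [pder_apply hY, mul_add, Finset.mul_sum]
  refine congrArg₂ _ rfl (Finset.sum_congr rfl fun j _ => by ring)

theorem covF_eq {X : VF n} {α : OneForm n} (hα : DifferentiableAt ℝ α t) :
    covF g X α t = fderiv ℝ α t (X t) - (conn g t (X t))ᵀ *ᵥ α t := by
  ext k
  rw [Pi.sub_apply, map_eq_sum_smul_single (fderiv ℝ α t), Finset.sum_apply]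
  simp only [covF, mul_sub, Finset.sum_sub_distrib, pder_apply hα, conn, mulVec, dotProduct,
    transpose_apply, leftMul_apply_apply, Finset.mul_sum, Finset.sum_mul]
  rw [Finset.sum_comm (f := fun m i => X t i * chr g m i k t * α t m)]
  simp only [mul_assoc, Pi.smul_apply, smul_eq_mul]

end LeviCivita

/-- The curvature operator `R(x, y)` of `g` at a point, in terms of the connection form. -/
def curv (g : Met n) (t x y : Pt n) : Matrix (Fin n) (Fin n) ℝ :=
  fderiv ℝ (fun s => conn g s y) t x - fderiv ℝ (fun s => conn g s x) t y
    + ⁅conn g t x, conn g t y⁆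

section Curvature

variable {U : Set (Pt n)} {t : Pt n} {g : Met n} {X Y : VF n}

theorem vbr_eq (hX : DifferentiableAt ℝ X t) (hY : DifferentiableAt ℝ Y t) :
    vbr X Y t = fderiv ℝ Y t (X t) - fderiv ℝ X t (Y t) := by
  ext k
  rw [map_eq_sum_smul_single (fderiv ℝ Y t), map_eq_sum_smul_single (fderiv ℝ X t)]
  simp only [vbr, pder_apply hX, pder_apply hY, Finset.sum_sub_distrib, Pi.sub_apply,
    Finset.sum_apply, Pi.smul_apply, smul_eq_mul]

theorem covV_const (g : Met n) (Y : VF n) (z : Pt n) :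
    covV g Y (fun _ => z) = fun s => conn g s (Y s) *ᵥ z := funext fun s => by
  rw [covV_eq (differentiableAt_const z), fderiv_const_apply]
  simp

theorem covV_covV_const (hU : IsOpen U) (hg : IsMetricOn U g) (hY : ContDiffOn ℝ ∞ Y U)
    (ht : t ∈ U) (X : VF n) (z : Pt n) :
    covV g X (covV g Y fun _ => z) t = (fderiv ℝ (fun s => conn g s (Y t)) t (X t)
      + conn g t (fderiv ℝ Y t (X t)) + conn g t (X t) * conn g t (Y t)) *ᵥ z := by
  have hconn := differentiableAt_of_contDiffOn hU
    (contDiffOn_family_apply (contDiffOn_conn hU hg) hY) ht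
  rw [covV_const, covV_eq (differentiableAt_mulVec_const hconn z), fderiv_mulVec_const hconn,
    fderiv_matrixFamily_apply hU (contDiffOn_conn hU hg) hY ht, mulVec_mulVec, ← add_mulVec]

theorem curvV_const (hU : IsOpen U) (hg : IsMetricOn U g) (hX : ContDiffOn ℝ ∞ X U)
    (hY : ContDiffOn ℝ ∞ Y U) (ht : t ∈ U) (z : Pt n) :
    curvV g X Y (fun _ => z) t = curv g t (X t) (Y t) *ᵥ z := by
  have hvbr := vbr_eq (differentiableAt_of_contDiffOn hU hX ht)
    (differentiableAt_of_contDiffOn hU hY ht)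
  ext k
  rw [curvV, covV_covV_const hU hg hX ht, covV_covV_const hU hg hY ht, covV_const]
  beta_reduce
  rw [hvbr, map_sub, ← Pi.sub_apply, ← Pi.sub_apply, ← sub_mulVec, ← sub_mulVec, curv,
    Ring.lie_def]
  congr 2
  abel

theorem curvF_eq (hU : IsOpen U) (hg : IsMetricOn U g) (hX : ContDiffOn ℝ ∞ X U)
    (hY : ContDiffOn ℝ ∞ Y U) (ht : t ∈ U) (α : OneForm n) :
    curvF g X Y α t = -((curv g t (X t) (Y t))ᵀ *ᵥ α t) := by
  ext k
  simp only [curvF, curvV_const hU hg hX hY ht, mulVec_single_one, col_apply, Pi.neg_apply]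
  simp only [mulVec, dotProduct, transpose_apply, mul_comm]

end Curvature

/-- The covariant derivative of a field of endomorphisms `A` with respect to the Levi-Civita
connection of `g`, in the direction `x`. -/
def covEnd (g A : Met n) (t x : Pt n) : Matrix (Fin n) (Fin n) ℝ :=
  fderiv ℝ A t x + ⁅conn g t x, A t⁆

/-- `A` is a field of endomorphisms commuting with the invariant product `L` and satisfying
`∇_x A = [T, L_x] + κ L_x`, for an infinitesimal conformal transformation `T` of factor `κ`. This
condition does not change when a multiple of the identity is added to `A`. -/
structure IsDeformation (U : Set (Pt n)) (g : Met n)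
    (L : Pt n → Pt n →ₗ[ℝ] Matrix (Fin n) (Fin n) ℝ) (A T : Met n) (κ : Pt n → ℝ) : Prop where
  contDiffOn_family : ∀ x, ContDiffOn ℝ ∞ (fun s => L s x) U
  contDiffOn_field : ContDiffOn ℝ ∞ A U
  contDiffOn_generator : ContDiffOn ℝ ∞ T U
  isInvariantProduct : ∀ t ∈ U, IsInvariantProduct (g t) (L t)
  commute : ∀ t ∈ U, ∀ x, Commute (A t) (L t x)
  symmetrization : ∀ t ∈ U, (T t)ᵀ * g t + g t * T t = κ t • g t
  covEnd_eq : ∀ t ∈ U, ∀ x, covEnd g A t x = ⁅T t, L t x⁆ + κ t • L t x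

section Compatible

variable {U : Set (Pt n)} {t : Pt n} {g h A T : Met n} {κ : Pt n → ℝ}
  {L : Pt n → Pt n →ₗ[ℝ] Matrix (Fin n) (Fin n) ℝ} {lam : ℝ}

namespace IsDeformation

theorem add_const (hA : IsDeformation U g L A T κ) (lam : ℝ) :
    IsDeformation U g L (fun s => A s + lam • 1) T κ where
  __ := hA
  contDiffOn_field := hA.contDiffOn_field.add contDiffOn_const
  commute t ht x := (hA.commute t ht x).add_left ((Commute.one_left _).smul_left lam)
  covEnd_eq t ht x := by
    have hfd : fderiv ℝ (fun s => A s + lam • 1) t x = fderiv ℝ A t x :=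
      DFunLike.congr_fun (fderiv_add_const (f := A) _) x
    rw [← hA.covEnd_eq t ht x, covEnd, covEnd, hfd, Ring.lie_def, Ring.lie_def]
    noncomm_ring

theorem isSelfAdjoint (hA : IsDeformation U g L A T κ) (hg : IsUnit (g t)) (ht : t ∈ U)
    (hhA : h t * A t = g t) (x : Pt n) : (h t).IsSelfAdjoint (L t x) := by
  have hAu : IsUnit (A t) := isUnit_of_mul_isUnit_right (hhA.symm ▸ hg)
  refine hAu.mul_left_injective ?_
  have hcomm := hA.commute t ht x
  have hself : (L t x)ᵀ * g t = g t * L t x := (hA.isInvariantProduct t ht).isSelfAdjoint x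
  linear_combination (norm := noncomm_ring) (L t x)ᵀ * hhA + hself - hhA * L t x + h t * hcomm.eq

theorem fderiv_field (hA : IsDeformation U g L A T κ) (ht : t ∈ U) (x : Pt n) :
    fderiv ℝ A t x = ⁅T t, L t x⁆ + κ t • L t x - ⁅conn g t x, A t⁆ :=
  eq_sub_of_add_eq (hA.covEnd_eq t ht x)

theorem mul_inv_mul_field (hA : IsDeformation U g L A T κ) (hg : IsUnit (g t)) (ht : t ∈ U)
    (hhA : h t * A t = g t) (x : Pt n) : T t * (A t)⁻¹ * L t x * A t = T t * L t x := by
  rw [Matrix.mul_assoc _ (L t x), ← (hA.commute t ht x).eq, Matrix.mul_assoc (T t),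
    ← Matrix.mul_assoc _ (A t), inv_mul_of_mul_eq hg hhA, Matrix.one_mul]

theorem transpose_mul_metric (hA : IsDeformation U g L A T κ) (hg : IsMetricOn U g)
    (hh : IsMetricOn U h) (hhA : h t * A t = g t) (ht : t ∈ U) (x : Pt n) :
    (T t * (A t)⁻¹ * L t x)ᵀ * g t = κ t • (h t * L t x) - h t * L t x * T t := by
  have hLh : (L t x)ᵀ * h t = h t * L t x := hA.isSelfAdjoint (hg.2 t ht).2 ht hhA x
  have hAh : (A t)ᵀ * h t = g t := by
    rw [← (hh.2 t ht).1.eq, ← transpose_mul, hhA, (hg.2 t ht).1.eq]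
  have hAinv : ((A t)⁻¹)ᵀ * (A t)ᵀ = 1 := by
    rw [← transpose_mul, mul_eq_one_comm.1 (inv_mul_of_mul_eq (hg.2 t ht).2 hhA), transpose_one]
  have hAinvh : ((A t)⁻¹)ᵀ * g t = h t := by
    rw [← hAh, ← Matrix.mul_assoc, hAinv, Matrix.one_mul]
  calc (T t * (A t)⁻¹ * L t x)ᵀ * g t
      = (L t x)ᵀ * ((A t)⁻¹)ᵀ * ((T t)ᵀ * g t) := by simp only [transpose_mul, Matrix.mul_assoc]
    _ = (L t x)ᵀ * ((A t)⁻¹)ᵀ * (κ t • g t - g t * T t) := by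
      rw [← hA.symmetrization t ht, add_sub_cancel_right]
    _ = κ t • ((L t x)ᵀ * (((A t)⁻¹)ᵀ * g t)) - (L t x)ᵀ * (((A t)⁻¹)ᵀ * g t) * T t := by
      simp only [Matrix.mul_sub, mul_smul_comm, Matrix.mul_assoc]
    _ = κ t • (h t * L t x) - h t * L t x * T t := by rw [hAinvh, hLh]

theorem fderiv_metric_mul (hA : IsDeformation U g L A T κ) (hU : IsOpen U)
    (hg : IsMetricOn U g) (hh : IsMetricOn U h) (hhA : ∀ s ∈ U, h s * A s = g s) (ht : t ∈ U)
    (x : Pt n) : fderiv ℝ h t x * A t + h t * fderiv ℝ A t x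
      = (conn g t x)ᵀ * g t + g t * conn g t x := by
  have hhd := differentiableAt_of_contDiffOn hU (smoothMet_iff.1 hh.1) ht
  have hAd := differentiableAt_of_contDiffOn hU hA.contDiffOn_field ht
  calc _ = fderiv ℝ (fun s => h s * A s) t x := (fderiv_matrix_mul hhd hAd x).symm
    _ = fderiv ℝ g t x := DFunLike.congr_fun (fderiv_congr_of_eqOn hU hhA ht) x
    _ = _ := fderiv_metric hU hg ht x

theorem conn_eq (hA : IsDeformation U g L A T κ) (hU : IsOpen U) (hg : IsMetricOn U g)
    (hh : IsMetricOn U h) (hhA : ∀ s ∈ U, h s * A s = g s) (ht : t ∈ U) (x : Pt n) :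
    conn h t x = conn g t x - T t * (A t)⁻¹ * L t x := by
  suffices hconn : (fun x => conn g t x - T t * (A t)⁻¹ * L t x) = conn h t from
    (congrFun hconn x).symm
  have hAu := IsUnit.of_mul_eq_one_right _ (inv_mul_of_mul_eq (hg.2 t ht).2 (hhA t ht))
  refine eq_conn hU hh ht (fun x y => ?_) fun x => hAu.mul_left_injective ?_
  · rw [sub_mulVec, sub_mulVec, conn_mulVec_comm hU hg ht, ← mulVec_mulVec,
      (hA.isInvariantProduct t ht).mulVec_comm, mulVec_mulVec]
  have hNA := hA.mul_inv_mul_field (hg.2 t ht).2 ht (hhA t ht) x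
  have hNg := hA.transpose_mul_metric hg hh (hhA t ht) ht x
  have hder := hA.fderiv_metric_mul hU hg hh hhA ht x
  rw [hA.fderiv_field ht, Ring.lie_def, Ring.lie_def] at hder
  rw [transpose_sub]
  linear_combination (norm := noncomm_ring)
    ((conn g t x)ᵀ - (T t * (A t)⁻¹ * L t x)ᵀ) * hhA t ht - hNg - h t * hNA - hder
    + hhA t ht * conn g t x

theorem conn_mul (hA : IsDeformation U g L A T κ) (hU : IsOpen U) (hg : IsMetricOn U g)
    (hh : IsMetricOn U h) (hhA : ∀ s ∈ U, h s * A s = g s) (ht : t ∈ U) (x : Pt n) :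
    conn h t x * A t = conn g t x * A t - T t * L t x := by
  rw [hA.conn_eq hU hg hh hhA ht, Matrix.sub_mul,
    hA.mul_inv_mul_field (hg.2 t ht).2 ht (hhA t ht)]

theorem fderiv_conn_mul (hA : IsDeformation U g L A T κ) (hU : IsOpen U) (hg : IsMetricOn U g)
    (hh : IsMetricOn U h) (hhA : ∀ s ∈ U, h s * A s = g s) (ht : t ∈ U) (x y : Pt n) :
    fderiv ℝ (fun s => conn h s y) t x * A t + conn h t y * fderiv ℝ A t x
      = fderiv ℝ (fun s => conn g s y) t x * A t + conn g t y * fderiv ℝ A t x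
        - fderiv ℝ (fun s => T s * L s y) t x := by
  have hAd := differentiableAt_of_contDiffOn hU hA.contDiffOn_field ht
  have hTd := differentiableAt_of_contDiffOn hU hA.contDiffOn_generator ht
  have hLd := differentiableAt_of_contDiffOn hU (hA.contDiffOn_family y) ht
  have hgd := differentiableAt_of_contDiffOn hU (contDiffOn_conn hU hg y) ht
  have hhd := differentiableAt_of_contDiffOn hU (contDiffOn_conn hU hh y) ht
  calc _ = fderiv ℝ (fun s => conn h s y * A s) t x := (fderiv_matrix_mul hhd hAd x).symm
    _ = fderiv ℝ (fun s => conn g s y * A s - T s * L s y) t x :=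
      DFunLike.congr_fun (fderiv_congr_of_eqOn hU (fun s hs => hA.conn_mul hU hg hh hhA hs y) ht) x
    _ = fderiv ℝ (fun s => conn g s y * A s) t x - fderiv ℝ (fun s => T s * L s y) t x :=
      DFunLike.congr_fun (fderiv_fun_sub (hgd.fun_mul hAd) (hTd.fun_mul hLd)) x
    _ = _ := by rw [fderiv_matrix_mul hgd hAd]

theorem curv_mul (hA : IsDeformation U g L A T κ) (hU : IsOpen U) (hg : IsMetricOn U g)
    (hh : IsMetricOn U h) (hhA : ∀ s ∈ U, h s * A s = g s) (ht : t ∈ U) (x y : Pt n) :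
    curv h t x y * A t = curv g t x y * A t
      - (covEnd g (fun s => T s * L s y) t x - covEnd g (fun s => T s * L s x) t y) := by
  have hAinv := inv_mul_of_mul_eq (hg.2 t ht).2 (hhA t ht)
  have hx := hA.conn_mul hU hg hh hhA ht x
  have hy := hA.conn_mul hU hg hh hhA ht y
  have hyx := hA.fderiv_conn_mul hU hg hh hhA ht x y
  have hxy := hA.fderiv_conn_mul hU hg hh hhA ht y x
  have hLL := ((hA.isInvariantProduct t ht).commute x y).eq
  have hNx := hA.conn_eq hU hg hh hhA ht x
  have hNy := hA.conn_eq hU hg hh hhA ht y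
  rw [hA.fderiv_field ht, hNy, Ring.lie_def, Ring.lie_def] at hyx
  rw [hA.fderiv_field ht, hNx, Ring.lie_def, Ring.lie_def] at hxy
  have hAx := (hA.commute t ht x).eq
  have hAy := (hA.commute t ht y).eq
  simp only [curv, covEnd, Ring.lie_def]
  set N := T t * (A t)⁻¹ with hN
  have hNA : N * A t = T t := by rw [hN, Matrix.mul_assoc, hAinv, Matrix.mul_one]
  linear_combination (norm := (noncomm_ring [smul_add]; module))
    hyx - hxy + conn h t x * hy - conn h t y * hx
    + hNx * (conn g t y * A t - T t * L t y) - hNy * (conn g t x * A t - T t * L t x)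
    + N * hLL * T t - κ t • (N * hLL) + (N * hAx - hNA * L t x) * conn g t y
    - (N * hAy - hNA * L t y) * conn g t x

end IsDeformation

theorem mup_covF (hg : (g t).IsSymm) (X : VF n) {α : OneForm n} (hα : DifferentiableAt ℝ α t) :
    mup g (covF g X α) t
      = (g t)⁻¹ *ᵥ fderiv ℝ α t (X t) - (conn g t (X t) * (g t)⁻¹)ᵀ *ᵥ α t := by
  change (g t)⁻¹ *ᵥ covF g X α t = _
  rw [covF_eq hα, mulVec_sub, mulVec_mulVec, transpose_mul, hg.inv.eq]

theorem mup_curvF (hU : IsOpen U) (hg : IsMetricOn U g) {X Y : VF n} (hX : ContDiffOn ℝ ∞ X U)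
    (hY : ContDiffOn ℝ ∞ Y U) (ht : t ∈ U) (α : OneForm n) :
    mup g (curvF g X Y α) t = -((curv g t (X t) (Y t) * (g t)⁻¹)ᵀ *ᵥ α t) := by
  change (g t)⁻¹ *ᵥ curvF g X Y α t = _
  rw [curvF_eq hU hg hX hY ht, mulVec_neg, mulVec_mulVec, transpose_mul, (hg.2 t ht).1.inv.eq]

theorem pencil_inv (hlam : IsUnit ((h t)⁻¹ + lam • (g t)⁻¹)) :
    (pencil h g lam t)⁻¹ = (h t)⁻¹ + lam • (g t)⁻¹ :=
  nonsing_inv_nonsing_inv _ ((isUnit_iff_isUnit_det _).1 hlam)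

theorem isMetricOn_pencil (hh : IsMetricOn U h) (hg : IsMetricOn U g)
    (hlam : ∀ s ∈ U, IsUnit ((h s)⁻¹ + lam • (g s)⁻¹)) : IsMetricOn U (pencil h g lam) := by
  have hinv : ∀ {f : Met n}, IsMetricOn U f → ContDiffOn ℝ ∞ (fun s => (f s)⁻¹) U := fun hf =>
    contDiffOn_matrix_inv (smoothMet_iff.1 hf.1) fun s hs => (hf.2 s hs).2
  refine ⟨smoothMet_iff.2 (contDiffOn_matrix_inv ((hinv hh).add ((hinv hg).const_smul lam)) hlam),
    fun s hs => ⟨?_, isUnit_nonsing_inv_iff.2 (hlam s hs)⟩⟩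
  exact ((hh.2 s hs).1.inv.add ((hg.2 s hs).1.inv.smul lam)).inv

theorem compatible_of_conn_of_curv (hU : IsOpen U) (hh : IsMetricOn U h) (hg : IsMetricOn U g)
    (hconn : ∀ lam : ℝ, (∀ s ∈ U, IsUnit ((h s)⁻¹ + lam • (g s)⁻¹)) → ∀ t ∈ U, ∀ x,
      conn (pencil h g lam) t x * (pencil h g lam t)⁻¹
        = conn h t x * (h t)⁻¹ + lam • (conn g t x * (g t)⁻¹))
    (hcurv : ∀ lam : ℝ, (∀ s ∈ U, IsUnit ((h s)⁻¹ + lam • (g s)⁻¹)) → ∀ t ∈ U, ∀ x y,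
      curv (pencil h g lam) t x y * (pencil h g lam t)⁻¹
        = curv h t x y * (h t)⁻¹ + lam • (curv g t x y * (g t)⁻¹)) :
    Compatible U h g := by
  refine ⟨fun lam hlam X _ α hα t ht k => ?_, fun lam hlam X Y hX hY α _ t ht k => ?_⟩
  · have hαt := differentiableAt_of_contDiffOn hU (smoothVF_iff.1 hα) ht
    have hp := isMetricOn_pencil hh hg hlam
    rw [mup_covF (hp.2 t ht).1 X hαt, mup_covF (hh.2 t ht).1 X hαt, mup_covF (hg.2 t ht).1 X hαt,
      hconn lam hlam t ht, pencil_inv (hlam t ht), transpose_add, transpose_smul, add_mulVec,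
      add_mulVec, smul_mulVec, smul_mulVec]
    simp only [Pi.add_apply, Pi.sub_apply, Pi.smul_apply, smul_eq_mul]
    ring
  · have hX' := smoothVF_iff.1 hX
    have hY' := smoothVF_iff.1 hY
    rw [mup_curvF hU (isMetricOn_pencil hh hg hlam) hX' hY' ht, mup_curvF hU hh hX' hY' ht,
      mup_curvF hU hg hX' hY' ht, hcurv lam hlam t ht, transpose_add, transpose_smul, add_mulVec,
      smul_mulVec]
    simp only [Pi.add_apply, Pi.neg_apply, Pi.smul_apply, smul_eq_mul]
    ring

theorem IsDeformation.compatible (hA : IsDeformation U g L A T κ) (hU : IsOpen U)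
    (hg : IsMetricOn U g) (hh : IsMetricOn U h) (hhA : ∀ s ∈ U, h s * A s = g s) :
    Compatible U h g := by
  have hinv : ∀ t ∈ U, A t * (g t)⁻¹ = (h t)⁻¹ := fun t ht => by
    refine (inv_eq_right_inv ?_).symm
    rw [← Matrix.mul_assoc, hhA t ht, mul_nonsing_inv _ ((isUnit_iff_isUnit_det _).1 (hg.2 t ht).2)]
  have hpinv : ∀ lam : ℝ, ∀ t ∈ U, IsUnit ((h t)⁻¹ + lam • (g t)⁻¹) →
      (A t + lam • 1) * (g t)⁻¹ = (pencil h g lam t)⁻¹ := fun lam t ht hlam => by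
    rw [Matrix.add_mul, hinv t ht, smul_mul_assoc, Matrix.one_mul, pencil_inv hlam]
  have hpA : ∀ lam : ℝ, (∀ s ∈ U, IsUnit ((h s)⁻¹ + lam • (g s)⁻¹)) → ∀ t ∈ U,
      pencil h g lam t * (A t + lam • 1) = g t := fun lam hlam t ht => by
    have hgd := (isUnit_iff_isUnit_det _).1 (hg.2 t ht).2
    have hpd := (isUnit_iff_isUnit_det _).1 ((isMetricOn_pencil hh hg hlam).2 t ht).2
    rw [← nonsing_inv_mul_cancel_right (g t) (A t + lam • 1) hgd, hpinv lam t ht (hlam t ht),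
      mul_nonsing_inv_cancel_left _ _ hpd]
  refine compatible_of_conn_of_curv hU hh hg (fun lam hlam t ht x => ?_) fun lam hlam t ht x y => ?_
  · rw [← hinv t ht, ← hpinv lam t ht (hlam t ht), ← Matrix.mul_assoc, ← Matrix.mul_assoc,
      (hA.add_const lam).conn_mul hU hg (isMetricOn_pencil hh hg hlam) (hpA lam hlam) ht,
      hA.conn_mul hU hg hh hhA ht]
    noncomm_ring
  · rw [← hinv t ht, ← hpinv lam t ht (hlam t ht), ← Matrix.mul_assoc, ← Matrix.mul_assoc,
      (hA.add_const lam).curv_mul hU hg (isMetricOn_pencil hh hg hlam) (hpA lam hlam) ht,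
      hA.curv_mul hU hg hh hhA ht]
    noncomm_ring

end Compatible

/-- The Jacobian matrix field of a vector field. -/
def jac (E : VF n) : Met n := fun t => LinearMap.toMatrix' (fderiv ℝ E t : Pt n →ₗ[ℝ] Pt n)

/-- The covariant Jacobian `x ↦ ∇_x E` of a vector field. -/
def covJac (g : Met n) (E : VF n) : Met n := fun t => jac E t + conn g t (E t)

/-- The Lie derivative along `E` of the left multiplication of a (1,2)-tensor field. -/
def lieLeftMul (E : VF n) (L : Pt n → Pt n →ₗ[ℝ] Matrix (Fin n) (Fin n) ℝ) (t x : Pt n) :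
    Matrix (Fin n) (Fin n) ℝ :=
  fderiv ℝ (fun s => L s x) t (E t) - ⁅jac E t, L t x⁆ + L t (jac E t *ᵥ x)

/-- The Lie derivative along `E` of the Levi-Civita connection of `g`; it is tensorial, the last
term accounting for the inhomogeneous transformation of the Christoffel symbols. -/
def lieConn (E : VF n) (g : Met n) (t x : Pt n) : Matrix (Fin n) (Fin n) ℝ :=
  lieLeftMul E (conn g) t x + fderiv ℝ (jac E) t x

/-- The covariant derivative `(∇_x L)(y)` of a family of endomorphisms `L` depending linearly on a
tangent vector, with respect to the Levi-Civita connection of `g`. -/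
def covLeftMul (g : Met n) (L : Pt n → Pt n →ₗ[ℝ] Matrix (Fin n) (Fin n) ℝ) (t x y : Pt n) :
    Matrix (Fin n) (Fin n) ℝ :=
  fderiv ℝ (fun s => L s y) t x + ⁅conn g t x, L t y⁆ - L t (conn g t x *ᵥ y)

section LieDerivative

variable {U : Set (Pt n)} {t : Pt n} {g h N : Met n} {E : VF n} {c : Mul2 n}
  {L : Pt n → Pt n →ₗ[ℝ] Matrix (Fin n) (Fin n) ℝ}

theorem jac_mulVec (E : VF n) (t x : Pt n) : jac E t *ᵥ x = fderiv ℝ E t x :=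
  LinearMap.toMatrix'_mulVec _ x

theorem contDiffOn_jac (hU : IsOpen U) (hE : ContDiffOn ℝ ∞ E U) : ContDiffOn ℝ ∞ (jac E) U := by
  refine smoothMet_iff.1 fun i j => ?_
  simp only [jac, LinearMap.toMatrix'_apply, ContinuousLinearMap.coe_coe]
  exact contDiffOn_pi.1 (contDiffOn_fderiv_apply hU hE contDiffOn_const) i

theorem fderiv_jac_mulVec_comm (hU : IsOpen U) (hE : ContDiffOn ℝ ∞ E U) (ht : t ∈ U)
    (x y : Pt n) : fderiv ℝ (jac E) t x *ᵥ y = fderiv ℝ (jac E) t y *ᵥ x := by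
  have hJ := differentiableAt_of_contDiffOn hU (contDiffOn_jac hU hE) ht
  rw [← fderiv_mulVec_const hJ, ← fderiv_mulVec_const hJ]
  simp only [jac_mulVec]
  exact fderiv_fderiv_comm hU hE ht y x

theorem contDiffOn_covJac (hU : IsOpen U) (hg : IsMetricOn U g) (hE : ContDiffOn ℝ ∞ E U) :
    ContDiffOn ℝ ∞ (covJac g E) U :=
  (contDiffOn_jac hU hE).add (contDiffOn_family_apply (contDiffOn_conn hU hg) hE)

theorem covV_eq_covJac_mulVec (hU : IsOpen U) (hg : IsMetricOn U g) (hE : ContDiffOn ℝ ∞ E U)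
    (ht : t ∈ U) (X : VF n) : covV g X E t = covJac g E t *ᵥ X t := by
  rw [covV_eq (differentiableAt_of_contDiffOn hU hE ht), covJac, add_mulVec, jac_mulVec,
    conn_mulVec_comm hU hg ht]

theorem lieMet_eq (hE : DifferentiableAt ℝ E t) (hg : DifferentiableAt ℝ g t) :
    lieMet E g t = fderiv ℝ g t (E t) + (jac E t)ᵀ * g t + g t * jac E t := by
  ext i j
  rw [map_eq_sum_smul_single (fderiv ℝ g t)]
  simp only [lieMet, Matrix.of_apply, pder_apply hE, pder_apply_apply hg, Matrix.add_apply,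
    Matrix.sum_apply, Matrix.smul_apply, smul_eq_mul, Matrix.mul_apply, transpose_apply, jac,
    LinearMap.toMatrix'_apply, ContinuousLinearMap.coe_coe, mul_comm (g t _ j)]

theorem lieMet_eq_covJac (hU : IsOpen U) (hg : IsMetricOn U g) (hE : ContDiffOn ℝ ∞ E U)
    (ht : t ∈ U) : lieMet E g t = (covJac g E t)ᵀ * g t + g t * covJac g E t := by
  rw [lieMet_eq (differentiableAt_of_contDiffOn hU hE ht)
    (differentiableAt_of_contDiffOn hU (smoothMet_iff.1 hg.1) ht), fderiv_metric hU hg ht, covJac,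
    transpose_add]
  noncomm_ring

theorem mapp_eq (c : Mul2 n) (X Y : VF n) (t : Pt n) :
    mapp c X Y t = leftMul c t (X t) *ᵥ Y t :=
  funext fun k => (leftMul_mulVec_apply c t (X t) (Y t) k).symm

theorem eq_of_mdown2_single_eq (hg : (g t).IsSymm ∧ IsUnit (g t)) {X Y : VF n}
    (h : ∀ k, mdown2 g X (fun _ => Pi.single k 1) t = mdown2 g Y (fun _ => Pi.single k 1) t) :
    X t = Y t := by
  have hmdown : ∀ (X : VF n) k, mdown2 g X (fun _ => Pi.single k 1) t = (g t *ᵥ X t) k :=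
    fun X k => by
      simp [mdown2, mulVec, dotProduct, Pi.single_apply, hg.1.apply]
  exact mulVec_injective_of_isUnit hg.2 (funext fun k => by rw [← hmdown, h, hmdown])

theorem vbr_const (hE : DifferentiableAt ℝ E t) (x : Pt n) :
    vbr E (fun _ => x) t = -(jac E t *ᵥ x) := by
  rw [vbr_eq hE (differentiableAt_const x), jac_mulVec, fderiv_const_apply,
    _root_.zero_apply, zero_sub]

theorem lieLeftMul_eq_sum (hL : ∀ x, DifferentiableAt ℝ (fun s => L s x) t)
    (x : Pt n) : lieLeftMul E L t x = ∑ i, x i • lieLeftMul E L t (Pi.single i 1) := by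
  have hbr : ⁅jac E t, L t x⁆ = ∑ i, x i • ⁅jac E t, L t (Pi.single i 1)⁆ := by
    rw [map_eq_sum_smul_single (L t) x]
    simp only [Ring.lie_def, Matrix.mul_sum, Matrix.sum_mul, Matrix.mul_smul, Matrix.smul_mul,
      smul_sub, Finset.sum_sub_distrib]
  have hjac : L t (jac E t *ᵥ x) = ∑ i, x i • L t (jac E t *ᵥ Pi.single i 1) := by
    simpa using map_eq_sum_smul_single (L t ∘ₗ (jac E t).mulVecLin) x
  have hder : fderiv ℝ (fun s => L s x) t (E t)
      = ∑ i, x i • fderiv ℝ (fun s => L s (Pi.single i 1)) t (E t) :=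
    fderiv_family_const hL x (E t)
  simp only [lieLeftMul, hder, hbr, hjac, smul_add, smul_sub, Finset.sum_add_distrib,
    Finset.sum_sub_distrib]

theorem leftMul_lieMul (hU : IsOpen U) (hE : ContDiffOn ℝ ∞ E U) (hc : SmoothMul2 U c)
    (ht : t ∈ U) (x : Pt n) : leftMul (lieMul E c) t x = lieLeftMul E (leftMul c) t x := by
  have hEt := differentiableAt_of_contDiffOn hU hE ht
  have hL := fun x => differentiableAt_of_contDiffOn hU (contDiffOn_leftMul hc x) ht
  rw [map_eq_sum_smul_single (leftMul (lieMul E c) t), lieLeftMul_eq_sum hL]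
  refine Finset.sum_congr rfl fun i _ => congrArg _ (ext_of_mulVec_single fun j => ?_)
  have hmapp : mapp c (fun _ => Pi.single i 1) (fun _ => Pi.single j 1)
    = fun s => leftMul c s (Pi.single i 1) *ᵥ Pi.single j 1 := funext fun s => mapp_eq ..
  calc leftMul (lieMul E c) t (Pi.single i 1) *ᵥ Pi.single j 1
    _ = fun k => lieMul E c t k i j := by
      ext k
      rw [mulVec_single_one, col_apply, leftMul_single_apply]
    _ = vbr E (fun s => leftMul c s (Pi.single i 1) *ᵥ Pi.single j 1) t
        - leftMul c t (vbr E (fun _ => Pi.single i 1) t) *ᵥ Pi.single j 1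
        - leftMul c t (Pi.single i 1) *ᵥ vbr E (fun _ => Pi.single j 1) t := by
      ext k
      rw [← hmapp, lieMul, mapp_eq, mapp_eq, Pi.sub_apply, Pi.sub_apply]
    _ = lieLeftMul E (leftMul c) t (Pi.single i 1) *ᵥ Pi.single j 1 := by
      rw [vbr_const hEt, vbr_const hEt, vbr_eq hEt (differentiableAt_mulVec_const (hL _) _),
        fderiv_mulVec_const (hL _), ← jac_mulVec, lieLeftMul]
      simp only [add_mulVec, sub_mulVec, Ring.lie_def, ← mulVec_mulVec, map_neg, neg_mulVec,
        mulVec_neg]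
      abel

theorem covLeftMul_eq_lieLeftMul (y : Pt n) : covLeftMul g L t (E t) y
      = lieLeftMul E L t y + ⁅covJac g E t, L t y⁆ - L t (covJac g E t *ᵥ y) := by
  simp only [covLeftMul, lieLeftMul, covJac, add_mulVec, map_add, Ring.lie_def]
  noncomm_ring

theorem covEnd_family_apply (hU : IsOpen U) (hg : IsMetricOn U g) (hE : ContDiffOn ℝ ∞ E U)
    (hL : ∀ x, ContDiffOn ℝ ∞ (fun s => L s x) U) (ht : t ∈ U) (x : Pt n) :
    covEnd g (fun s => L s (E s)) t x
      = covLeftMul g L t x (E t) + L t (covJac g E t *ᵥ x) := by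
  rw [covEnd, fderiv_matrixFamily_apply hU hL hE ht, covLeftMul, covJac, add_mulVec, map_add,
    jac_mulVec, conn_mulVec_comm hU hg ht]
  abel

theorem covMul_eq (hU : IsOpen U) (hc : SmoothMul2 U c) (X : VF n) {Y : VF n}
    (hY : ContDiffOn ℝ ∞ Y U) (ht : t ∈ U) (z : Pt n) :
    covMul g c X Y (fun _ => z) t = covLeftMul g (leftMul c) t (X t) (Y t) *ᵥ z := by
  have hYt := differentiableAt_of_contDiffOn hU hY ht
  have hL := contDiffOn_leftMul hc
  have hLY := differentiableAt_of_contDiffOn hU (contDiffOn_family_apply hL hY) ht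
  have hmapp : mapp c Y (fun _ => z) = fun s => leftMul c s (Y s) *ᵥ z :=
    funext fun s => mapp_eq ..
  calc covMul g c X Y (fun _ => z) t
    _ = covV g X (fun s => leftMul c s (Y s) *ᵥ z) t - leftMul c t (covV g X Y t) *ᵥ z
        - leftMul c t (Y t) *ᵥ covV g X (fun _ => z) t := by
      ext k
      rw [← hmapp, covMul, mapp_eq, mapp_eq, Pi.sub_apply, Pi.sub_apply]
    _ = covLeftMul g (leftMul c) t (X t) (Y t) *ᵥ z := by
      rw [covV_eq (differentiableAt_mulVec_const hLY z), fderiv_mulVec_const hLY,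
        fderiv_matrixFamily_apply hU hL hY ht, covV_eq hYt, covV_const, covLeftMul]
      simp only [add_mulVec, sub_mulVec, map_add, Ring.lie_def, ← mulVec_mulVec]
      abel

theorem lieConn_mulVec_comm (hU : IsOpen U) (hg : IsMetricOn U g) (hE : ContDiffOn ℝ ∞ E U)
    (ht : t ∈ U) (x y : Pt n) : lieConn E g t x *ᵥ y = lieConn E g t y *ᵥ x := by
  have hconn := fun x => differentiableAt_of_contDiffOn hU (contDiffOn_conn hU hg x) ht
  have hder : fderiv ℝ (fun s => conn g s x) t (E t) *ᵥ y
      = fderiv ℝ (fun s => conn g s y) t (E t) *ᵥ x := by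
    rw [← fderiv_mulVec_const (hconn x), ← fderiv_mulVec_const (hconn y),
      fderiv_congr_of_eqOn hU (fun s hs => conn_mulVec_comm hU hg hs x y) ht]
  simp only [lieConn, lieLeftMul, Ring.lie_def, add_mulVec, sub_mulVec, ← mulVec_mulVec, hder,
    conn_mulVec_comm hU hg ht x y, fderiv_jac_mulVec_comm hU hE ht x y,
    conn_mulVec_comm hU hg ht (jac E t *ᵥ _)]
  abel

theorem fderiv_fderiv_metric_apply (hU : IsOpen U) (hg : IsMetricOn U g)
    (hE : ContDiffOn ℝ ∞ E U) (ht : t ∈ U) (x : Pt n) :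
    fderiv ℝ (fun s => fderiv ℝ g s (E s)) t x
      = fderiv ℝ (fun s => (conn g s x)ᵀ * g s + g s * conn g s x) t (E t)
        + fderiv ℝ g t (jac E t *ᵥ x) := by
  rw [jac_mulVec]
  exact (fderiv_fderiv_apply hU (smoothMet_iff.1 hg.1) hE ht x).trans
    (congrArg (· (E t) + fderiv ℝ g t _)
      (fderiv_congr_of_eqOn hU (fun s hs => fderiv_metric hU hg hs x) ht))

theorem fderiv_fderiv_metric_of_lieMet_eq (hU : IsOpen U) (hg : IsMetricOn U g)
    (hE : ContDiffOn ℝ ∞ E U) {φ : Pt n → ℝ} (hφ : ContDiffOn ℝ ∞ φ U)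
    (hlie : ∀ s ∈ U, lieMet E g s = φ s • g s) (ht : t ∈ U) (x : Pt n) :
    fderiv ℝ (fun s => fderiv ℝ g s (E s)) t x
      + fderiv ℝ (fun s => (jac E s)ᵀ * g s + g s * jac E s) t x
      = φ t • fderiv ℝ g t x + fderiv ℝ φ t x • g t := by
  have hgs := smoothMet_iff.1 hg.1
  have hgt := differentiableAt_of_contDiffOn hU hgs ht
  have hgEt := differentiableAt_of_contDiffOn hU (contDiffOn_fderiv_apply hU hgs hE) ht
  have hJ := differentiableAt_of_contDiffOn hU (contDiffOn_jac hU hE) ht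
  have hJg := ((differentiableAt_transpose hJ).fun_mul hgt).fun_add (hgt.fun_mul hJ)
  have hgE : ∀ s ∈ U, fderiv ℝ g s (E s) + ((jac E s)ᵀ * g s + g s * jac E s) = φ s • g s :=
    fun s hs => by
      rw [← hlie s hs, lieMet_eq (differentiableAt_of_contDiffOn hU hE hs)
        (differentiableAt_of_contDiffOn hU hgs hs), add_assoc]
  calc _ = fderiv ℝ (fun s => fderiv ℝ g s (E s) + ((jac E s)ᵀ * g s + g s * jac E s)) t x :=
        (congrArg (· x) (fderiv_fun_add hgEt hJg)).symm
    _ = fderiv ℝ (fun s => φ s • g s) t x := congrArg (· x) (fderiv_congr_of_eqOn hU hgE ht)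
    _ = _ := congrArg (· x) (fderiv_fun_smul (differentiableAt_of_contDiffOn hU hφ ht) hgt)

theorem lieConn_symmetrization (hU : IsOpen U) (hg : IsMetricOn U g) (hE : ContDiffOn ℝ ∞ E U)
    {φ : Pt n → ℝ} (hφ : ContDiffOn ℝ ∞ φ U) (hlie : ∀ s ∈ U, lieMet E g s = φ s • g s)
    (ht : t ∈ U) (x : Pt n) :
    (lieConn E g t x)ᵀ * g t + g t * lieConn E g t x = fderiv ℝ φ t x • g t := by
  have hgt := differentiableAt_of_contDiffOn hU (smoothMet_iff.1 hg.1) ht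
  have hEt := differentiableAt_of_contDiffOn hU hE ht
  have hJ := differentiableAt_of_contDiffOn hU (contDiffOn_jac hU hE) ht
  have hΓ := differentiableAt_of_contDiffOn hU (contDiffOn_conn hU hg x) ht
  have hgE := (lieMet_eq hEt hgt).symm.trans (hlie t ht)
  have hgxE := fderiv_fderiv_metric_of_lieMet_eq hU hg hE hφ hlie ht x
  rw [fderiv_fderiv_metric_apply hU hg hE ht, fderiv_symmetrization hΓ hgt,
    fderiv_symmetrization hJ hgt, fderiv_metric hU hg ht (jac E t *ᵥ x),
    fderiv_metric hU hg ht x] at hgxE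
  simp only [lieConn, lieLeftMul, Ring.lie_def, transpose_add, transpose_sub, transpose_mul]
  linear_combination (norm := skip) hgxE - (conn g t x)ᵀ * hgE - hgE * conn g t x
  simp only [smul_add, Matrix.mul_smul, Matrix.smul_mul]
  noncomm_ring

theorem lieConn_eq_conformalVariation (hU : IsOpen U) (hg : IsMetricOn U g)
    (hE : ContDiffOn ℝ ∞ E U) {φ : Pt n → ℝ} (hφ : ContDiffOn ℝ ∞ φ U)
    (hlie : ∀ s ∈ U, lieMet E g s = φ s • g s) (ht : t ∈ U) :
    lieConn E g t = conformalVariation (g t) (fun i => pder i φ t) := by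
  have hgt := hg.2 t ht
  refine eq_of_torsionFree_of_symmetrization_eq hgt.1 hgt.2 (lieConn_mulVec_comm hU hg hE ht)
    (conformalVariation_mulVec_comm hgt.1 _) fun x => ?_
  rw [lieConn_symmetrization hU hg hE hφ hlie ht, conformalVariation_symmetrization hgt.1 hgt.2,
    map_eq_sum_smul_single (fderiv ℝ φ t)]
  rfl

theorem lieConn_sub_mul (hU : IsOpen U) (hg : IsMetricOn U g)
    (hL : ∀ x, ContDiffOn ℝ ∞ (fun s => L s x) U) (hN : ContDiffOn ℝ ∞ N U)
    (hconn : ∀ s ∈ U, ∀ x, conn h s x = conn g s x - N s * L s x) (ht : t ∈ U) {κ : ℝ} {x : Pt n}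
    (hlie : lieLeftMul E L t x = κ • L t x) :
    lieConn E h t x = lieConn E g t x
      + -(fderiv ℝ N t (E t) - ⁅jac E t, N t⁆ + κ • N t) * L t x := by
  have hgt := differentiableAt_of_contDiffOn hU (contDiffOn_conn hU hg x) ht
  have hNt := differentiableAt_of_contDiffOn hU hN ht
  have hLt := differentiableAt_of_contDiffOn hU (hL x) ht
  have hder : fderiv ℝ (fun s => conn h s x) t (E t) = fderiv ℝ (fun s => conn g s x) t (E t)
      - (fderiv ℝ N t (E t) * L t x + N t * fderiv ℝ (fun s => L s x) t (E t)) := by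
    rw [← fderiv_matrix_mul hNt hLt]
    exact DFunLike.congr_fun ((fderiv_congr_of_eqOn hU (fun s hs => hconn s hs x) ht).trans
      (fderiv_fun_sub hgt (hNt.fun_mul hLt))) (E t)
  simp only [lieConn, lieLeftMul, Ring.lie_def, hder, hconn t ht] at hlie ⊢
  linear_combination (norm := noncomm_ring) -(N t * hlie)

end LieDerivative

/-- The infinitesimal generator `∇E - μ/2` of the deformation of the metric `g` along `E`. -/
def generator (g : Met n) (E : VF n) (μ : Pt n → ℝ) : Met n :=
  fun t => covJac g E t - (μ t / 2) • 1

theorem mul_leftMul_eq_of_inv_mul_eq {t : Pt n} {c : Mul2 n} {g h : Met n} {E : VF n}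
    (hh : IsUnit (h t))
    (hdef : ∀ a j, ∑ l, (h t)⁻¹ a l * g t l j = ∑ i, c t a i j * E t i) :
    h t * leftMul c t (E t) = g t := by
  have hA : leftMul c t (E t) = (h t)⁻¹ * g t := by
    ext a j
    rw [leftMul_apply_apply, Matrix.mul_apply, hdef]
    exact Finset.sum_congr rfl fun i _ => mul_comm ..
  rw [hA, mul_nonsing_inv_cancel_left _ _ ((isUnit_iff_isUnit_det _).1 hh)]

end WeakFManifold

namespace IsWeakF

open WeakFManifold Matrix
open scoped ContDiff

attribute [local instance] Matrix.linftyOpNormedRing Matrix.linftyOpNormedAlgebra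

variable {U : Set (Pt n)} {t : Pt n} {c : Mul2 n} {g h : Met n} {E e Einv : VF n}
  {Dt κ : Pt n → ℝ}

theorem isInvariantProduct (hW : IsWeakF U c g E e Einv Dt κ) (ht : t ∈ U) :
    IsInvariantProduct (g t) (leftMul c t) where
  mulVec_comm := leftMul_mulVec_comm (hW.comm t ht)
  commute x y := by
    have hsingle : ∀ i j, Commute (leftMul c t (Pi.single i 1)) (leftMul c t (Pi.single j 1)) :=
      fun i j => by
        ext a b
        simp only [Matrix.mul_apply, leftMul_single_apply, ← hW.assoc t ht, hW.comm t ht _ j i]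
    rw [map_eq_sum_smul_single (leftMul c t) x, map_eq_sum_smul_single (leftMul c t) y]
    exact Commute.sum_left _ _ _ fun i _ => Commute.sum_right _ _ _ fun j _ =>
      ((hsingle i j).smul_left _).smul_right _
  isSelfAdjoint x := by
    have hsingle : ∀ i, (leftMul c t (Pi.single i 1))ᵀ * g t = g t * leftMul c t (Pi.single i 1) :=
      fun i => by
        ext a b
        simp only [Matrix.mul_apply, transpose_apply, leftMul_single_apply, ← hW.invar t ht,
          hW.comm t ht _ i a, mul_comm (g t _ b)]
    change (leftMul c t x)ᵀ * g t = g t * leftMul c t x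
    rw [map_eq_sum_smul_single (leftMul c t) x]
    simp only [transpose_sum, transpose_smul, Matrix.sum_mul, Matrix.mul_sum, smul_mul_assoc,
      mul_smul_comm, hsingle]

theorem leftMul_unit (hW : IsWeakF U c g E e Einv Dt κ) (ht : t ∈ U) :
    leftMul c t (e t) = 1 := by
  ext a i
  rw [leftMul_apply_apply, Matrix.one_apply, ← hW.unit t ht]
  exact Finset.sum_congr rfl fun j _ => mul_comm ..

theorem lieLeftMul_eq (hW : IsWeakF U c g E e Einv Dt κ) (hU : IsOpen U) (ht : t ∈ U)
    (x : Pt n) : lieLeftMul E (leftMul c) t x = κ t • leftMul c t x := by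
  rw [← leftMul_lieMul hU (smoothVF_iff.1 hW.smooth_E) hW.smooth_c ht]
  ext a j
  simp only [leftMul_apply_apply, Matrix.smul_apply, smul_eq_mul, Finset.mul_sum,
    hW.lie_c t ht, mul_left_comm]

theorem lieMet_eq (hW : IsWeakF U c g E e Einv Dt κ) (ht : t ∈ U) :
    lieMet E g t = Dt t • g t := by
  ext i j
  exact hW.lie_g t ht i j

theorem covLeftMul_comm (hW : IsWeakF U c g E e Einv Dt κ) (hU : IsOpen U) (ht : t ∈ U)
    (x : Pt n) : covLeftMul g (leftMul c) t (E t) x = covLeftMul g (leftMul c) t x (E t) := by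
  refine ext_of_mulVec_single fun j => ?_
  have hconst := fun x : Pt n => contDiffOn_const (c := x) (s := U) (n := ∞) (𝕜 := ℝ) (E := Pt n)
  rw [← covMul_eq hU hW.smooth_c E (hconst x) ht,
    ← covMul_eq hU hW.smooth_c (fun _ => x) (smoothVF_iff.1 hW.smooth_E) ht]
  refine eq_of_mdown2_single_eq (hW.met.2 t ht) fun k => ?_
  exact hW.sym_E (fun _ => x) _ _ (smoothVF_iff.2 (hconst x)) (smoothVF_iff.2 (hconst _))
    (smoothVF_iff.2 (hconst _)) t ht

theorem covEnd_leftMul (hW : IsWeakF U c g E e Einv Dt κ) (hU : IsOpen U) (ht : t ∈ U)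
    (x : Pt n) : covEnd g (fun s => leftMul c s (E s)) t x
      = ⁅covJac g E t, leftMul c t x⁆ + κ t • leftMul c t x := by
  rw [covEnd_family_apply hU hW.met (smoothVF_iff.1 hW.smooth_E) (contDiffOn_leftMul hW.smooth_c)
    ht, ← hW.covLeftMul_comm hU ht, covLeftMul_eq_lieLeftMul, hW.lieLeftMul_eq hU ht]
  abel

theorem isDeformation (hW : IsWeakF U c g E e Einv Dt κ) (hU : IsOpen U) :
    IsDeformation U g (leftMul c) (fun s => leftMul c s (E s)) (generator g E (Dt - κ)) κ where
  contDiffOn_family := contDiffOn_leftMul hW.smooth_c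
  contDiffOn_field :=
    contDiffOn_family_apply (contDiffOn_leftMul hW.smooth_c) (smoothVF_iff.1 hW.smooth_E)
  contDiffOn_generator :=
    (contDiffOn_covJac hU hW.met (smoothVF_iff.1 hW.smooth_E)).sub
      (((hW.smooth_Dt.sub hW.smooth_k).div_const 2).smul contDiffOn_const)
  isInvariantProduct _ := hW.isInvariantProduct
  commute t ht x := (hW.isInvariantProduct ht).commute (E t) x
  symmetrization t ht := by
    have hlie := (lieMet_eq_covJac hU hW.met (smoothVF_iff.1 hW.smooth_E) ht).symm.trans
      (hW.lieMet_eq ht)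
    simp only [generator, Pi.sub_apply, transpose_sub, transpose_smul, transpose_one,
      Matrix.sub_mul, Matrix.mul_sub, smul_mul_assoc, mul_smul_comm, Matrix.one_mul,
      Matrix.mul_one]
    linear_combination (norm := module) hlie
  covEnd_eq t ht x := by
    rw [hW.covEnd_leftMul hU ht, generator, Ring.lie_def, Ring.lie_def]
    noncomm_ring

theorem covJac_dual (hW : IsWeakF U c g E e Einv Dt κ) (hU : IsOpen U)
    (hh : IsMetricOn U h) (hhA : ∀ s ∈ U, h s * leftMul c s (E s) = g s) (ht : t ∈ U) :
    covJac h E t = ((Dt t - κ t) / 2) • 1 := by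
  have hgt := (hW.met.2 t ht).2
  have hconn := (hW.isDeformation hU).conn_eq hU hW.met hh hhA ht (E t)
  rw [Matrix.mul_assoc, inv_mul_of_mul_eq hgt (hhA t ht), Matrix.mul_one, generator] at hconn
  rw [covJac, hconn, covJac]
  simp only [Pi.sub_apply]
  abel

theorem lieMet_dual (hW : IsWeakF U c g E e Einv Dt κ) (hU : IsOpen U)
    (hh : IsMetricOn U h) (hhA : ∀ s ∈ U, h s * leftMul c s (E s) = g s) (ht : t ∈ U) :
    lieMet E h t = (Dt - κ) t • h t := by
  rw [lieMet_eq_covJac hU hh (smoothVF_iff.1 hW.smooth_E) ht, hW.covJac_dual hU hh hhA ht]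
  simp only [transpose_smul, transpose_one, smul_mul_assoc, mul_smul_comm, Matrix.one_mul,
    Matrix.mul_one, Pi.sub_apply]
  module

theorem conformalVariation_dual (hW : IsWeakF U c g E e Einv Dt κ) (hU : IsOpen U)
    (hh : IsMetricOn U h) (hhA : ∀ s ∈ U, h s * leftMul c s (E s) = g s) (ht : t ∈ U) :
    ∃ N : Matrix (Fin n) (Fin n) ℝ, ∀ x,
      conformalVariation (h t) (fun i => pder i (Dt - κ) t) x
        = conformalVariation (g t) (fun i => pder i Dt t) x + N * leftMul c t x := by
  have hE := smoothVF_iff.1 hW.smooth_E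
  have hA := hW.isDeformation hU
  have hAu : ∀ s ∈ U, IsUnit (leftMul c s (E s)) := fun s hs =>
    IsUnit.of_mul_eq_one_right _ (inv_mul_of_mul_eq (hW.met.2 s hs).2 (hhA s hs))
  have hN : ContDiffOn ℝ ∞
      (fun s => generator g E (Dt - κ) s * (leftMul c s (E s))⁻¹) U :=
    hA.contDiffOn_generator.mul (contDiffOn_matrix_inv hA.contDiffOn_field hAu)
  have hconn := fun s hs => hA.conn_eq (t := s) hU hW.met hh hhA hs
  have hlie := fun x =>
    lieConn_sub_mul hU hW.met hA.contDiffOn_family hN hconn ht (hW.lieLeftMul_eq hU ht x)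
  rw [lieConn_eq_conformalVariation hU hh hE (hW.smooth_Dt.sub hW.smooth_k)
      (fun s hs => hW.lieMet_dual hU hh hhA hs) ht,
    lieConn_eq_conformalVariation hU hW.met hE hW.smooth_Dt (fun s hs => hW.lieMet_eq hs) ht]
    at hlie
  exact ⟨_, hlie⟩

theorem fderiv_mulFactor_eq_zero (hW : IsWeakF U c g E e Einv Dt κ) (hU : IsOpen U)
    (hh : IsMetricOn U h) (hhA : ∀ s ∈ U, h s * leftMul c s (E s) = g s) (hn : 3 ≤ n)
    (ht : t ∈ U) : fderiv ℝ κ t = 0 := by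
  have hgt := hW.met.2 t ht
  have hinv := hW.isInvariantProduct ht
  have hself := (hW.isDeformation hU).isSelfAdjoint hgt.2 ht (hhA t ht)
  have hinv' : IsInvariantProduct (h t) (leftMul c t) := ⟨hinv.mulVec_comm, hinv.commute, hself⟩
  obtain ⟨N, hN⟩ := hW.conformalVariation_dual hU hh hhA ht
  have hd := hinv.eq_of_conformalVariation_eq (by simpa using hn) hgt.1 hgt.2 hinv'
    (hW.leftMul_unit ht) hN
  have hDt := differentiableAt_of_contDiffOn hU hW.smooth_Dt ht
  have hκ := differentiableAt_of_contDiffOn hU hW.smooth_k ht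
  have hpder : ∀ i, fderiv ℝ κ t (Pi.single i 1) = 0 := fun i => by
    refine sub_eq_self.1 (Eq.trans ?_ (congrFun hd i))
    exact congrArg (· (Pi.single i 1)) (fderiv_sub hDt hκ).symm
  ext x
  rw [map_eq_sum_smul_single (fderiv ℝ κ t)]
  exact Finset.sum_eq_zero fun i _ => by rw [hpder, smul_zero]

theorem exists_mulFactor_eq_const (hW : IsWeakF U c g E e Einv Dt κ) (hU : IsOpen U)
    (hh : IsMetricOn U h) (hhA : ∀ s ∈ U, h s * leftMul c s (E s) = g s)
    (hUc : IsPreconnected U) (hn : 3 ≤ n) : ∃ k₀, ∀ t ∈ U, κ t = k₀ := by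
  have hd : DifferentiableOn ℝ κ U := hW.smooth_k.differentiableOn (by simp)
  exact hU.exists_is_const_of_fderiv_eq_zero hUc hd fun t ht =>
    hW.fderiv_mulFactor_eq_zero hU hh hhA hn ht

end IsWeakF

/-- Conversely, a connected weak F-manifold (U, •, h̃, E) of dimension ≥ 3
determines, via h*(h̃ X) = E • X, a weak quasi-homogeneous pencil (h, h̃) with Euler
vector field E (in particular the pair (h, h̃) is compatible). -/
theorem stmt3 {n : ℕ} (hn : 3 ≤ n) (U : Set (Pt n)) (hUopen : IsOpen U)
    (hUconn : IsConnected U)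
    (c : Mul2 n) (h' : Met n) (E e Einv : VF n) (Dt k : Pt n → ℝ)
    (hW : IsWeakF U c h' E e Einv Dt k)
    (h : Met n) (hmet : IsMetricOn U h)
    (hdef : ∀ t ∈ U, ∀ a j, (∑ l, (h t)⁻¹ a l * h' t l j) = ∑ i, c t a i j * E t i) :
    ∃ D : Pt n → ℝ, IsWQH U h h' E D Dt := by
  have hE := WeakFManifold.smoothVF_iff.1 hW.smooth_E
  have hhA : ∀ t ∈ U, h t * WeakFManifold.leftMul c t (E t) = h' t := fun t ht =>
    WeakFManifold.mul_leftMul_eq_of_inv_mul_eq (hmet.2 t ht).2 (hdef t ht)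
  obtain ⟨k₀, hk₀⟩ := hW.exists_mulFactor_eq_const hUopen hmet hhA hUconn.isPreconnected hn
  exact ⟨Dt - k, {
    met_h := hmet
    met_h' := hW.met
    compat := (hW.isDeformation hUopen).compatible hUopen hW.met hmet hhA
    smooth_E := hW.smooth_E
    smooth_D := hW.smooth_Dt.sub hW.smooth_k
    smooth_Dt := hW.smooth_Dt
    lie_h' := hW.lie_g
    cov_E := fun X _ t ht a => by
      rw [WeakFManifold.covV_eq_covJac_mulVec hUopen hmet hE ht,
        hW.covJac_dual hUopen hmet hhA ht, Matrix.smul_mulVec, Matrix.one_mulVec]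
      rfl
    diff_const := ⟨k₀, fun t ht => by rw [Pi.sub_apply, sub_sub_cancel, hk₀ t ht]⟩ }⟩
end
end
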